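/- arXiv:1407.2970 — 3 statements merged into one kernel-verified Lean document; each statement's English description precedes it below -/
import Mathlib

section
/- Let F_q be a finite field with q elements, let n ≥ 4 be a composite integer with smallest prime divisor ℓ, and define α_n = 2·q^{ℓ + n/ℓ − 2} if n ≠ ℓ², and α_n = q^{2ℓ − 2} if n = ℓ². Then the number #D_n(F_q) of decomposable monic original polynomials of degree n over F_q satisfies α_n/2 ≤ #D_n(F_q) ≤ α_n·(1 + q^{−n/(3ℓ²)}), where the exponent n/(3ℓ²) is taken as a real number. -/
open Polynomial

/-- The set of decomposable monic original polynomials of degree `n` over `F`: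
monic, vanishing at 0, and of the form `g ∘ h` with `deg g, deg h ≥ 2`. -/
def Duniv (F : Type*) [CommRing F] (n : ℕ) : Set (Polynomial F) :=
  {f | f.Monic ∧ f.natDegree = n ∧ f.eval 0 = 0 ∧
    ∃ g h : Polynomial F, 2 ≤ g.natDegree ∧ 2 ≤ h.natDegree ∧ f = g.comp h}

/-- `alphaN q n` is `2 q^{ℓ + n/ℓ - 2}` if `n ≠ ℓ²` and `q^{2ℓ - 2}` if `n = ℓ²`, where `ℓ` is
the smallest prime divisor of `n`. -/
noncomputable def alphaN (q n : ℕ) : ℝ :=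
  if n = n.minFac ^ 2 then (q : ℝ) ^ (2 * n.minFac - 2)
  else 2 * (q : ℝ) ^ (n.minFac + n / n.minFac - 2)

section helpers
variable {F : Type} [Field F]

lemma comp_decomp (G h : F[X]) (k m : ℕ) (hk : 1 ≤ k) (hG : G.natDegree ≤ k)
    (hm : h.natDegree ≤ m) :
    ∃ R : F[X], G.comp h = C (G.coeff k) * h ^ k + R ∧ R.natDegree ≤ (k - 1) * m := by
  set R0 := G - C (G.coeff k) * X ^ k with hR0
  have hd : R0.natDegree ≤ k - 1 := by
    rw [natDegree_le_iff_coeff_eq_zero]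
    intro N hN
    rw [hR0, coeff_sub, coeff_C_mul, coeff_X_pow]
    by_cases h1 : N = k
    · simp [h1]
    · rw [if_neg h1, coeff_eq_zero_of_natDegree_lt (by omega)]; simp
  refine ⟨R0.comp h, ?_, ?_⟩
  · simp [hR0]
  · exact natDegree_comp_le.trans (Nat.mul_le_mul hd hm)

lemma pow_coeff_top (h : F[X]) (hh : h.Monic) (k : ℕ) :
    (h ^ k).coeff (k * h.natDegree) = 1 := by
  have := (hh.pow k)
  rw [← hh.natDegree_pow]; exact this

lemma pow_coeff_next (h : F[X]) (hh : h.Monic) (k m : ℕ) (hk : 1 ≤ k) (hm : h.natDegree = m)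
    (hm1 : 1 ≤ m) :
    (h ^ k).coeff (k * m - 1) = k * h.coeff (m - 1) := by
  have h1 := hh.nextCoeff_pow k
  have hd : (h ^ k).natDegree = k * m := by rw [hh.natDegree_pow, hm]
  rw [nextCoeff_of_natDegree_pos (by rw [hd]; positivity),
    nextCoeff_of_natDegree_pos (by omega), hd, hm] at h1
  rw [h1]; simp

lemma comp_coeff_top (G h : F[X]) (hh : h.Monic) (k m : ℕ) (hk : 1 ≤ k) (hG : G.natDegree ≤ k)
    (hm : h.natDegree = m) (hm1 : 1 ≤ m) :
    (G.comp h).coeff (k * m) = G.coeff k := by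
  obtain ⟨R, hR, hRd⟩ := comp_decomp G h k m hk hG hm.le
  have : (k - 1) * m < k * m := by
    apply Nat.mul_lt_mul_of_pos_right <;> omega
  rw [hR, coeff_add, coeff_C_mul, coeff_eq_zero_of_natDegree_lt (by omega : R.natDegree < k * m),
    ← hm, pow_coeff_top h hh]; simp

lemma comp_coeff_next (G h : F[X]) (hh : h.Monic) (k m : ℕ) (hk : 1 ≤ k) (hG : G.natDegree ≤ k)
    (hm : h.natDegree = m) (hm1 : 2 ≤ m) :
    (G.comp h).coeff (k * m - 1) = G.coeff k * (k * h.coeff (m - 1)) := by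
  obtain ⟨R, hR, hRd⟩ := comp_decomp G h k m hk hG hm.le
  have : (k - 1) * m + m = k * m := by
    obtain ⟨j, rfl⟩ := Nat.exists_eq_add_of_le' hk
    simp; ring
  rw [hR, coeff_add, coeff_C_mul,
    coeff_eq_zero_of_natDegree_lt (by omega : R.natDegree < k * m - 1),
    pow_coeff_next h hh k m hk hm (by omega)]; simp

lemma comp_diff (G G' h w : F[X]) (hh : h.Monic) (k m i : ℕ) (hk : 1 ≤ k)
    (hG : G.natDegree ≤ k) (hG' : G'.natDegree ≤ k) (hc : G.coeff k = G'.coeff k)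
    (hm : h.natDegree = m) (hw : w.natDegree = i) (hi : 1 ≤ i) (him : i < m) :
    (G'.comp (h + w) - G.comp h).natDegree ≤ (k - 1) * m + i ∧
    (G'.comp (h + w) - G.comp h).coeff ((k - 1) * m + i) = G.coeff k * (k * w.coeff i) := by
  have hwlt : w.degree < h.degree := by
    apply degree_lt_degree; omega
  have hh' : (h + w).Monic := hh.add_of_left hwlt
  have hm' : (h + w).natDegree = m := by
    rw [natDegree_add_eq_left_of_natDegree_lt (by omega), hm]
  obtain ⟨R, hR, hRd⟩ := comp_decomp G h k m hk hG hm.le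
  obtain ⟨R', hR', hRd'⟩ := comp_decomp G' (h + w) k m hk hG' hm'.le
  set S : F[X] := ∑ j ∈ Finset.range k, (h + w) ^ j * h ^ (k - 1 - j) with hS
  have hgeo : (h + w) ^ k - h ^ k = S * w := by
    have := (Commute.all (h + w) h).geom_sum₂_mul k
    rw [← this]; simp [hS]
  have hterm : ∀ j ∈ Finset.range k, ((h + w) ^ j * h ^ (k - 1 - j)).Monic ∧
      ((h + w) ^ j * h ^ (k - 1 - j)).natDegree = (k - 1) * m := by
    intro j hj
    have hj' := Finset.mem_range.1 hj
    refine ⟨(hh'.pow j).mul (hh.pow _), ?_⟩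
    rw [(hh'.pow j).natDegree_mul (hh.pow _), hh'.natDegree_pow, hh.natDegree_pow, hm, hm',
      ← add_mul]
    congr 1; omega
  have hSd : S.natDegree ≤ (k - 1) * m :=
    natDegree_sum_le_of_forall_le _ _ fun j hj => (hterm j hj).2.le
  have hSc : S.coeff ((k - 1) * m) = k := by
    rw [hS, finsetSum_coeff]
    rw [Finset.sum_congr rfl (g := fun _ => (1 : F))]
    · simp
    · intro j hj
      rw [← (hterm j hj).2]; exact (hterm j hj).1
  have key : G'.comp (h + w) - G.comp h = C (G.coeff k) * (S * w) + (R' - R) := by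
    rw [hR, hR', ← hc, ← hgeo]; ring
  have hRR : (R' - R).natDegree ≤ (k - 1) * m := (natDegree_sub_le _ _).trans (by simp [*])
  have hSw : (S * w).natDegree ≤ (k - 1) * m + i := natDegree_mul_le.trans (by omega)
  constructor
  · rw [key]
    refine (natDegree_add_le _ _).trans (max_le ?_ (by omega))
    exact (natDegree_C_mul_le _ _).trans hSw
  · rw [key, coeff_add, coeff_C_mul, coeff_mul_add_eq_of_natDegree_le hSd hw.le, hSc,
      coeff_eq_zero_of_natDegree_lt (by omega : (R' - R).natDegree < (k - 1) * m + i)]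
    simp

/-- monic original of degree d -/
def IsP (d : ℕ) (f : F[X]) : Prop := f.Monic ∧ f.natDegree = d ∧ f.coeff 0 = 0

lemma IsP.sub_deg {d : ℕ} {f f' : F[X]} (hd : 1 ≤ d) (hf : IsP d f) (hf' : IsP d f') :
    (f' - f).natDegree < d := by
  have : (f' - f).natDegree ≤ d - 1 := by
    rw [natDegree_le_iff_coeff_eq_zero]
    intro N hN
    rw [coeff_sub]
    rcases (show d ≤ N by omega).eq_or_lt with h1 | h1
    · have e1 : f.coeff N = 1 := by rw [← h1, ← hf.2.1]; exact hf.1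
      have e2 : f'.coeff N = 1 := by rw [← h1, ← hf'.2.1]; exact hf'.1
      rw [e1, e2, sub_self]
    · rw [coeff_eq_zero_of_natDegree_lt (by rw [hf'.2.1]; exact h1),
        coeff_eq_zero_of_natDegree_lt (by rw [hf.2.1]; exact h1), sub_self]
  omega

lemma isP_X_pow {d : ℕ} (hd : 1 ≤ d) : IsP d (X ^ d : F[X]) :=
  ⟨monic_X_pow d, natDegree_X_pow d, by simp [coeff_X_pow]; omega⟩

lemma natDegree_pos_of_orig {w : F[X]} (hw : w ≠ 0) (h0 : w.coeff 0 = 0) : 1 ≤ w.natDegree := by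
  by_contra hlt
  have : w.natDegree = 0 := by omega
  rw [eq_C_of_natDegree_eq_zero this, h0] at hw
  simp at hw

lemma comp_cancel {g g' h : F[X]} (hh : 1 ≤ h.natDegree) (e : g.comp h = g'.comp h) : g = g' := by
  have h1 : (g - g').comp h = 0 := by rw [sub_comp, e, sub_self]
  rw [comp_eq_zero_iff] at h1
  rcases h1 with h1 | ⟨_, h1⟩
  · exact sub_eq_zero.1 h1
  · rw [h1] at hh; simp at hh

lemma tame_inj {k m : ℕ} (hk : 1 ≤ k) (hm : 1 ≤ m) (hkF : (k : F) ≠ 0) {g g' h h' : F[X]}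
    (hg : IsP k g) (hg' : IsP k g') (hh : IsP m h) (hh' : IsP m h')
    (e : g.comp h = g'.comp h') : g = g' ∧ h = h' := by
  have hw : h' - h = 0 := by
    by_contra hne
    have hlt := hh.sub_deg hm hh'
    have h1 := natDegree_pos_of_orig hne (by rw [coeff_sub, hh.2.2, hh'.2.2, sub_self])
    have := (comp_diff g g' h (h' - h) hh.1 k m _ hk hg.2.1.le hg'.2.1.le (by
      have e1 : g.coeff k = 1 := by rw [← hg.2.1]; exact hg.1
      have e2 : g'.coeff k = 1 := by rw [← hg'.2.1]; exact hg'.1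
      rw [e1, e2]) hh.2.1 rfl h1 hlt).2
    rw [add_sub_cancel, e, sub_self, coeff_zero] at this
    have e1 : g.coeff k = 1 := by rw [← hg.2.1]; exact hg.1
    rw [e1, one_mul] at this
    exact mul_ne_zero hkF (by simpa using hne) this.symm
  have hw' : h = h' := (sub_eq_zero.1 hw).symm
  refine ⟨?_, hw'⟩
  subst hw'
  exact comp_cancel (by rw [hh.2.1]; exact hm) e

lemma pth_coeff {p : ℕ} [Fact p.Prime] [CharP F p] (f : F[X]) (j : ℕ) (hj : ¬ p ∣ j) :
    (f ^ p).coeff j = 0 := by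
  rw [← Polynomial.map_frobenius_expand, coeff_map, coeff_expand (Fact.out : p.Prime).pos, if_neg hj]
  simp

lemma pth_coeff_mul {p : ℕ} [Fact p.Prime] [CharP F p] (f : F[X]) (j : ℕ) :
    (f ^ p).coeff (p * j) = (f.coeff j) ^ p := by
  rw [← Polynomial.map_frobenius_expand, coeff_map, mul_comm, coeff_expand_mul (Fact.out : p.Prime).pos]
  rfl

/-- wild, degree of left component `m` divisible by `p`, right component of degree `p`. -/
lemma wildB_inj {p m : ℕ} [Fact p.Prime] [CharP F p] (hpm : p ∣ m) (hm : 1 ≤ m)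
    {g g' h h' : F[X]}
    (hg : IsP m g) (hg' : IsP m g') (hh : IsP p h) (hh' : IsP p h')
    (ha : g.coeff (m - 1) ≠ 0) (haa : g.coeff (m - 1) = g'.coeff (m - 1))
    (e : g.comp h = g'.comp h') : g = g' ∧ h = h' := by
  have hp : p.Prime := Fact.out
  have hpm' : p ≤ m := Nat.le_of_dvd hm hpm
  have hp2 := hp.two_le
  have hw : h' - h = 0 := by
    by_contra hne
    have hlt := hh.sub_deg hp.one_le hh'
    have h1 := natDegree_pos_of_orig hne (by rw [coeff_sub, hh.2.2, hh'.2.2, sub_self])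
    have hX := isP_X_pow (F := F) hm
    have d1 := hX.sub_deg hm hg
    have d2 := hX.sub_deg hm hg'
    have c1 : (g - X ^ m).coeff (m - 1) = g.coeff (m - 1) := by
      rw [coeff_sub, coeff_X_pow, if_neg (by omega), sub_zero]
    have c2 : (g' - X ^ m).coeff (m - 1) = g'.coeff (m - 1) := by
      rw [coeff_sub, coeff_X_pow, if_neg (by omega), sub_zero]
    have := (comp_diff (g - X ^ m) (g' - X ^ m) h (h' - h) hh.1 (m - 1) p _ (by omega) (by omega)
      (by omega) (by rw [c1, c2, haa]) hh.2.1 rfl h1 hlt).2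
    obtain ⟨s, rfl⟩ := hpm
    have e2 : (g' - X ^ (p * s)).comp (h + (h' - h)) - (g - X ^ (p * s)).comp h
        = (h ^ s - h' ^ s) ^ p := by
      rw [add_sub_cancel, sub_comp, sub_comp, e, sub_pow_char]
      simp only [X_pow_comp]; ring
    rw [e2, pth_coeff, c1] at this
    · refine mul_ne_zero ha (mul_ne_zero ?_ (by simpa using hne)) this.symm
      rw [Ne, CharP.cast_eq_zero_iff F p]
      intro hd
      have := (Nat.dvd_sub_iff_right hm (dvd_mul_right p s)).1 hd
      exact hp.one_lt.ne' (Nat.dvd_one.1 this)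
    · intro hd
      rw [Nat.dvd_add_right (dvd_mul_left _ _)] at hd
      exact absurd (Nat.le_of_dvd h1 hd) (by omega)
  have hw' : h = h' := (sub_eq_zero.1 hw).symm
  refine ⟨?_, hw'⟩
  subst hw'
  exact comp_cancel (by rw [hh.2.1]; exact hp.one_le) e

lemma comp_split (g h : F[X]) (k : ℕ) : g.comp h = h ^ k + (g - X ^ k).comp h := by
  simp

/-- coefficients of the `B` compositions -/
lemma wildB_coeff {p s : ℕ} [Fact p.Prime] [CharP F p] (hs : 1 ≤ s)
    {g h : F[X]} (hg : IsP (p * s) g) (hh : IsP p h) :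
    (g.comp h).coeff (p * (p * s - 1)) = g.coeff (p * s - 1) + (s * h.coeff (p - 1)) ^ p ∧
    (g.comp h).coeff (p * (p * s - 1) - 1) = - (g.coeff (p * s - 1) * h.coeff (p - 1)) := by
  have hp : p.Prime := Fact.out
  have hp2 := hp.two_le
  have hm : p ≤ p * s := Nat.le_mul_of_pos_right _ hs
  have hX := isP_X_pow (F := F) (d := p * s) (by omega)
  have d1 := hX.sub_deg (by omega) hg
  have c1 : (g - X ^ (p * s)).coeff (p * s - 1) = g.coeff (p * s - 1) := by
    rw [coeff_sub, coeff_X_pow, if_neg (by omega), sub_zero]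
  have hcast : ((p * s - 1 : ℕ) : F) = -1 := by
    rw [Nat.cast_sub (by omega)]; simp
  rw [comp_split g h (p * s)]
  constructor
  · rw [coeff_add, mul_comm p s, pow_mul, pth_coeff_mul, mul_comm s p, mul_comm p (p * s - 1),
      comp_coeff_top _ h hh.1 _ p (by omega) (by omega) hh.2.1 hp.one_le, c1, mul_comm p s,
      pow_coeff_next h hh.1 s p hs hh.2.1 hp.one_le, add_comm]
  · rw [coeff_add, mul_comm p s, pow_mul, pth_coeff, zero_add, mul_comm s p,
      mul_comm p (p * s - 1), 
      comp_coeff_next _ h hh.1 _ p (by omega) (by omega) hh.2.1 hp.two_le, c1, hcast]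
    · ring
    · intro hd
      rw [mul_comm s p] at hd
      have h3 := (Nat.dvd_sub_iff_right (Nat.mul_pos hp.pos (by omega)) (dvd_mul_right p _)).1 hd
      exact hp.one_lt.ne' (Nat.dvd_one.1 h3)

/-- `B`-compositions with nonzero second coefficients are not `A`-compositions. -/
lemma wild_disj {p s : ℕ} [Fact p.Prime] [CharP F p] (hs : 2 ≤ s)
    {g h g1 h1 : F[X]} (hg : IsP (p * s) g) (hh : IsP p h)
    (hg1 : IsP p g1) (hh1 : IsP (p * s) h1)
    (ha : g.coeff (p * s - 1) ≠ 0) (hc : h.coeff (p - 1) ≠ 0) : g.comp h ≠ g1.comp h1 := by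
  intro e
  have hp : p.Prime := Fact.out
  have hp2 := hp.two_le
  have h2 := (wildB_coeff (by omega) hg hh).2
  have hX := isP_X_pow (F := F) (d := p) (by omega)
  have d1 := hX.sub_deg (by omega) hg1
  have d2 : ((g1 - X ^ p).comp h1).natDegree ≤ (p - 1) * (p * s) :=
    natDegree_comp_le.trans (Nat.mul_le_mul (by omega) hh1.2.1.le)
  have hps : p * 2 ≤ p * s := Nat.mul_le_mul_left p hs
  rw [e, comp_split g1 h1 p, coeff_add, pth_coeff, zero_add, coeff_eq_zero_of_natDegree_lt] at h2
  · exact mul_ne_zero ha hc (neg_eq_zero.1 h2.symm)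
  · refine d2.trans_lt ?_
    have : (p - 1) * (p * s) + p * s = p * (p * s) := by
      obtain ⟨j, hj⟩ : ∃ j, p = j + 1 := ⟨p - 1, by omega⟩
      rw [hj]; simp; ring
    have : p * (p * s - 1) + p = p * (p * s) := by
      obtain ⟨j, hj⟩ : ∃ j, p * s = j + 1 := ⟨p * s - 1, by omega⟩
      rw [hj]; simp; ring
    omega
  · intro hd
    have h3 := (Nat.dvd_sub_iff_right (Nat.mul_pos hp.pos (by omega)) (dvd_mul_right p _)).1 hd
    exact hp.one_lt.ne' (Nat.dvd_one.1 h3)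


lemma wildA_aux {p m : ℕ} [Fact p.Prime] [CharP F p] (hpm : p ∣ m) (hm : 1 ≤ m)
    (hcop : (p - 1).Coprime m)
    {g g' h h' : F[X]}
    (hg : IsP p g) (hg' : IsP p g') (hh : IsP m h) (hh' : IsP m h')
    (hgX : g ≠ X ^ p) (hc : h.coeff (m - 1) ≠ 0) (hcc : h.coeff (m - 1) = h'.coeff (m - 1))
    (hle : (g' - X ^ p).natDegree ≤ (g - X ^ p).natDegree)
    (e : g.comp h = g'.comp h') : h = h' := by
  have hp : p.Prime := Fact.out
  have hp2 := hp.two_le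
  have hpm' := Nat.le_of_dvd hm hpm
  have hX := isP_X_pow (F := F) (d := p) (by omega)
  have d1 := hX.sub_deg (by omega) hg
  have hG0 : g - X ^ p ≠ 0 := sub_ne_zero.2 hgX
  have hk1 := natDegree_pos_of_orig hG0 (by rw [coeff_sub, hg.2.2, hX.2.2, sub_self])
  have hlead : (g - X ^ p).coeff (g - X ^ p).natDegree ≠ 0 := by simpa using hG0
  generalize hG : g - X ^ p = G at *
  generalize hG' : g' - X ^ p = G' at *
  generalize hk : G.natDegree = k at *
  have hkF : (k : F) ≠ 0 := by
    rw [Ne, CharP.cast_eq_zero_iff F p]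
    intro hd; exact absurd (Nat.le_of_dvd hk1 hd) (by omega)
  have e1 : G'.comp h' - G.comp h = (h - h') ^ p := by
    rw [comp_split g h p, comp_split g' h' p, hG, hG'] at e
    rw [sub_pow_char]
    linear_combination -e
  have hco : G.coeff k = G'.coeff k := by
    have h1 := comp_coeff_next G h hh.1 k m hk1 hk.le hh.2.1 (by omega)
    have h2 := comp_coeff_next G' h' hh'.1 k m hk1 hle hh'.2.1 (by omega)
    have h3 := congrArg (fun P => P.coeff (k * m - 1)) e1
    simp only [coeff_sub] at h3
    rw [pth_coeff, h1, h2, ← hcc] at h3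
    · rw [← sub_mul] at h3
      rcases mul_eq_zero.1 h3 with h4 | h4
      · exact (sub_eq_zero.1 h4).symm
      · exact absurd h4 (mul_ne_zero hkF hc)
    · intro hd
      have h3 := (Nat.dvd_sub_iff_right (Nat.mul_pos hk1 hm) (hpm.mul_left k)).1 hd
      exact hp.one_lt.ne' (Nat.dvd_one.1 h3)
  by_contra hne
  have hw0 : h' - h ≠ 0 := sub_ne_zero.2 (Ne.symm hne)
  have hlt := hh.sub_deg hm hh'
  have h1 := natDegree_pos_of_orig hw0 (by rw [coeff_sub, hh.2.2, hh'.2.2, sub_self])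
  obtain ⟨t1, t2⟩ := comp_diff G G' h (h' - h) hh.1 k m _ hk1 hk.le hle hco hh.2.1 rfl h1 hlt
  rw [add_sub_cancel, e1] at t1 t2
  have t3 : ((h - h') ^ p).coeff ((k - 1) * m + (h' - h).natDegree) ≠ 0 := by
    rw [t2]
    exact mul_ne_zero hlead (mul_ne_zero hkF (by simpa using hw0))
  have t4 := le_natDegree_of_ne_zero t3
  have t5 : ((h - h') ^ p).natDegree = p * (h' - h).natDegree := by
    rw [natDegree_pow, ← natDegree_neg, neg_sub]
  rw [t5] at t1 t4
  generalize (h' - h).natDegree = i at *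
  have t6 : (p - 1) * i = (k - 1) * m := by
    have : (p - 1) * i + i = p * i := by
      obtain ⟨j, hj⟩ : ∃ j, p = j + 1 := ⟨p - 1, by omega⟩
      rw [hj]; simp; ring
    omega
  have t7 : p - 1 ∣ k - 1 := hcop.dvd_of_dvd_mul_right (Dvd.intro _ t6)
  have t8 : k - 1 = 0 := by
    by_contra hk0
    have := Nat.le_of_dvd (by omega) t7
    omega
  rw [t8, zero_mul] at t6
  rcases Nat.mul_eq_zero.1 t6 with h | h <;> omega

lemma wildA_inj {p m : ℕ} [Fact p.Prime] [CharP F p] (hpm : p ∣ m) (hm : p < m)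
    (hcop : (p - 1).Coprime m)
    {g g' h h' : F[X]}
    (hg : IsP p g) (hg' : IsP p g') (hh : IsP m h) (hh' : IsP m h')
    (hc : g = X ^ p ∨ h.coeff (m - 1) ≠ 0) (hc' : g' = X ^ p ∨ h'.coeff (m - 1) ≠ 0)
    (e : g.comp h = g'.comp h') : g = g' ∧ h = h' := by
  have hp : p.Prime := Fact.out
  have hp2 := hp.two_le
  have hX := isP_X_pow (F := F) (d := p) (by omega)
  have d1 := hX.sub_deg (by omega) hg
  have d2 := hX.sub_deg (by omega) hg'
  have b1 : ((g - X ^ p).comp h).natDegree ≤ (p - 1) * m :=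
    natDegree_comp_le.trans (Nat.mul_le_mul (by omega) hh.2.1.le)
  have b2 : ((g' - X ^ p).comp h').natDegree ≤ (p - 1) * m :=
    natDegree_comp_le.trans (Nat.mul_le_mul (by omega) hh'.2.1.le)
  have hlt : (p - 1) * m < p * (m - 1) := by
    have : (p - 1) * m + m = p * m := by
      obtain ⟨j, hj⟩ : ∃ j, p = j + 1 := ⟨p - 1, by omega⟩
      rw [hj]; simp; ring
    have : p * (m - 1) + p = p * m := by
      obtain ⟨j, hj⟩ : ∃ j, m = j + 1 := ⟨m - 1, by omega⟩
      rw [hj]; simp; ring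
    omega
  have hcc : h.coeff (m - 1) = h'.coeff (m - 1) := by
    have h3 : (g.comp h).coeff (p * (m - 1)) = (g'.comp h').coeff (p * (m - 1)) := by rw [e]
    rw [comp_split g h p, comp_split g' h' p, coeff_add, coeff_add, pth_coeff_mul, pth_coeff_mul,
      coeff_eq_zero_of_natDegree_lt (b1.trans_lt hlt),
      coeff_eq_zero_of_natDegree_lt (b2.trans_lt hlt), add_zero, add_zero] at h3
    exact frobenius_inj F p h3
  have hhh : h = h' := by
    by_cases hgX : g = X ^ p
    · by_cases hgX' : g' = X ^ p
      · rw [hgX, hgX', X_pow_comp, X_pow_comp] at e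
        exact frobenius_inj F[X] p e
      · have h0 := hc'.resolve_left hgX'
        refine (wildA_aux hpm (by omega) hcop hg' hg hh' hh hgX' h0 hcc.symm ?_ e.symm).symm
        rw [hgX]; simp
    · by_cases hgX' : g' = X ^ p
      · have h0 := hc.resolve_left hgX
        refine wildA_aux hpm (by omega) hcop hg hg' hh hh' hgX h0 hcc ?_ e
        rw [hgX']; simp
      · have h0' := hc'.resolve_left hgX'
        have h0 := hc.resolve_left hgX
        rcases le_total (g' - X ^ p).natDegree (g - X ^ p).natDegree with hl | hl
        · exact wildA_aux hpm (by omega) hcop hg hg' hh hh' hgX h0 hcc hl e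
        · exact (wildA_aux hpm (by omega) hcop hg' hg hh' hh hgX' h0' hcc.symm hl e.symm).symm
  refine ⟨?_, hhh⟩
  subst hhh
  exact comp_cancel (by rw [hh.2.1]; omega) e


lemma isP_iff {d : ℕ} (f : F[X]) : IsP d f ↔
    f.coeff d = 1 ∧ (∀ j, d < j → f.coeff j = 0) ∧ f.coeff 0 = 0 := by
  constructor
  · rintro ⟨h1, h2, h3⟩
    refine ⟨by rw [← h2]; exact h1, fun j hj => coeff_eq_zero_of_natDegree_lt (by omega), h3⟩
  · rintro ⟨h1, h2, h3⟩
    have hle : f.natDegree ≤ d := natDegree_le_iff_coeff_eq_zero.2 fun N hN => h2 N hN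
    have hge : d ≤ f.natDegree := le_natDegree_of_ne_zero (by rw [h1]; exact one_ne_zero)
    have heq := le_antisymm hle hge
    exact ⟨by rw [Monic, leadingCoeff, heq, h1], heq, h3⟩

/-- affine family of polynomials -/
def affSet (B : F[X]) (k : ℕ) : Set F[X] := (fun r => B + X * r) '' (degreeLT F k : Set F[X])

lemma mem_affSet (B f : F[X]) (k : ℕ) : f ∈ affSet B k ↔
    f.coeff 0 = B.coeff 0 ∧ ∀ j, k < j → f.coeff j = B.coeff j := by
  constructor
  · rintro ⟨r, hr, rfl⟩
    refine ⟨by simp, fun j hj => ?_⟩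
    obtain ⟨i, rfl⟩ : ∃ i, j = i + 1 := ⟨j - 1, by omega⟩
    have : r.coeff i = 0 := by
      apply coeff_eq_zero_of_degree_lt
      refine (mem_degreeLT.1 hr).trans_le ?_
      exact_mod_cast (by omega : k ≤ i)
    simp [coeff_X_mul, this]
  · rintro ⟨h0, h1⟩
    refine ⟨(f - B).divX, ?_, ?_⟩
    · apply mem_degreeLT.2
      rw [degree_lt_iff_coeff_zero]
      intro m hm
      rw [coeff_divX, coeff_sub, h1 _ (by omega), sub_self]
    · have := X_mul_divX_add (f - B)
      rw [coeff_sub, h0, sub_self, C_0, add_zero] at this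
      simp [this]

variable [Fintype F]

lemma affSet_card (B : F[X]) (k : ℕ) :
    (affSet B k).Finite ∧ (affSet B k).ncard = Fintype.card F ^ k := by
  have e := (degreeLTEquiv F k).toEquiv
  have hfin : Finite (degreeLT F k) := Finite.of_equiv _ e.symm
  have hfin' : (degreeLT F k : Set F[X]).Finite := Set.toFinite _
  refine ⟨hfin'.image _, ?_⟩
  rw [affSet, Set.ncard_image_of_injective]
  · rw [← Nat.card_coe_set_eq]
    refine (Nat.card_congr e).trans ?_
    simp
  · intro r r' h
    simpa using h

lemma isP_set (d : ℕ) (hd : 1 ≤ d) : {f : F[X] | IsP d f} = affSet (X ^ d) (d - 1) := by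
  ext f
  rw [Set.mem_ofPred_eq, isP_iff, mem_affSet]
  simp only [coeff_X_pow]
  constructor
  · rintro ⟨h1, h2, h3⟩
    refine ⟨by rw [h3, if_neg (by omega)], fun j hj => ?_⟩
    split_ifs with h
    · rw [h, h1]
    · exact h2 j (by omega)
  · rintro ⟨h1, h2⟩
    refine ⟨by rw [h2 d (by omega), if_pos rfl], fun j hj => ?_, ?_⟩
    · rw [h2 j (by omega), if_neg (by omega)]
    · rw [h1, if_neg (by omega)]

lemma isQ_set (d : ℕ) (hd : 2 ≤ d) (c : F) : {f : F[X] | IsP d f ∧ f.coeff (d - 1) = c} =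
    affSet (X ^ d + C c * X ^ (d - 1)) (d - 2) := by
  ext f
  rw [Set.mem_ofPred_eq, isP_iff, mem_affSet]
  simp only [coeff_X_pow, coeff_add, coeff_C_mul]
  constructor
  · rintro ⟨⟨h1, h2, h3⟩, h4⟩
    refine ⟨by rw [h3, if_neg (by omega), if_neg (by omega)]; simp, fun j hj => ?_⟩
    rcases (show j = d ∨ j = d - 1 ∨ d < j by omega) with h | h | h
    · rw [if_pos h, if_neg (by omega), h, h1]; simp
    · rw [if_pos h, if_neg (by omega), h, h4]; simp
    · rw [h2 j h, if_neg (by omega), if_neg (by omega)]; simp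
  · rintro ⟨h1, h2⟩
    refine ⟨⟨by rw [h2 d (by omega), if_pos rfl, if_neg (by omega)]; simp, fun j hj => ?_, ?_⟩, ?_⟩
    · rw [h2 j (by omega), if_neg (by omega), if_neg (by omega)]; simp
    · rw [h1, if_neg (by omega), if_neg (by omega)]; simp
    · rw [h2 _ (by omega), if_neg (by omega), if_pos rfl]; simp

lemma isP_finite (d : ℕ) : {f : F[X] | IsP d f}.Finite := by
  rcases Nat.eq_zero_or_pos d with h | h
  · refine (Set.finite_singleton (1 : F[X])).subset ?_
    rintro f ⟨h1, h2, h3⟩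
    exact h1.natDegree_eq_zero.1 (h2.trans h)
  · rw [isP_set d h]; exact (affSet_card _ _).1

variable (F) in
/-- monic original polynomials -/
noncomputable def PF (d : ℕ) : Finset F[X] := (isP_finite d).toFinset

open scoped Classical in
/-- monic original polynomials with given second coefficient -/
noncomputable def QF (d : ℕ) (c : F) : Finset F[X] := (PF F d).filter fun f => f.coeff (d - 1) = c

lemma mem_PF {d : ℕ} {f : F[X]} : f ∈ PF F d ↔ IsP d f := by simp [PF]

lemma mem_QF {d : ℕ} {c : F} {f : F[X]} : f ∈ QF d c ↔ IsP d f ∧ f.coeff (d - 1) = c := by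
  simp [QF, mem_PF]

lemma card_PF {d : ℕ} (hd : 1 ≤ d) : (PF F d).card = Fintype.card F ^ (d - 1) := by
  rw [← (affSet_card (X ^ d : F[X]) (d - 1)).2, ← isP_set d hd, ← Set.ncard_coe_finset]
  congr 1; ext f; simp [mem_PF]

lemma card_QF {d : ℕ} (hd : 2 ≤ d) (c : F) : (QF d c).card = Fintype.card F ^ (d - 2) := by
  rw [← (affSet_card (X ^ d + C c * X ^ (d - 1) : F[X]) (d - 2)).2, ← isQ_set d hd,
    ← Set.ncard_coe_finset]
  congr 1; ext f; simp [mem_QF]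

/-- image size of `(a, c) ↦ (a + ψ c, - a c)` on nonzero pairs -/
lemma image_card [DecidableEq F] (ψ : F → F) :
    Fintype.card F * (Fintype.card F - 1) ≤
      2 * (((Finset.univ.filter fun x : F => x ≠ 0) ×ˢ (Finset.univ.filter fun x : F => x ≠ 0)).image
        (fun t : F × F => (t.1 + ψ t.2, - (t.1 * t.2)))).card := by
  set U := Finset.univ.filter fun x : F => x ≠ 0 with hU
  set φ : F × F → F × F := fun t => (t.1 + ψ t.2, - (t.1 * t.2)) with hφ
  have hUc : U.card = Fintype.card F - 1 := by
    rw [hU, Finset.filter_ne', Finset.card_erase_of_mem (Finset.mem_univ _), Finset.card_univ]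
  set S := U ×ˢ U with hS
  set I := S.image φ with hI
  let r : F × F → ℤ := fun y => ((S.filter fun x => φ x = y).card : ℤ)
  -- sum of fibre sizes
  have h1 : ∑ y ∈ I, r y = S.card := by
    have := Finset.card_eq_sum_card_image φ S
    rw [this]; push_cast; rfl
  -- collisions
  have h2 : ∑ y ∈ I, r y ^ 2 = (((S ×ˢ S).filter fun z => φ z.1 = φ z.2).card : ℤ) := by
    have e1 : ((S ×ˢ S).filter fun z => φ z.1 = φ z.2) =
        I.biUnion fun y => (S.filter fun x => φ x = y) ×ˢ (S.filter fun x => φ x = y) := by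
      ext ⟨z1, z2⟩
      simp only [Finset.mem_filter, Finset.mem_product, Finset.mem_biUnion, hI, Finset.mem_image]
      constructor
      · rintro ⟨⟨a, b⟩, c⟩
        exact ⟨φ z1, ⟨z1, a, rfl⟩, ⟨a, rfl⟩, b, c.symm⟩
      · rintro ⟨y, -, ⟨a, b⟩, c, d⟩
        exact ⟨⟨a, c⟩, b.trans d.symm⟩
    rw [e1, Finset.card_biUnion]
    · push_cast
      refine Finset.sum_congr rfl fun y _ => ?_
      rw [Finset.card_product]; push_cast; simp only [r]; ring
    · intro y _ y' _ hne
      rw [Function.onFun, Finset.disjoint_left]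
      rintro ⟨z1, z2⟩ h h'
      simp only [Finset.mem_filter, Finset.mem_product] at h h'
      exact hne (h.1.2.symm.trans h'.1.2)
  have h3 : (((S ×ˢ S).filter fun z => φ z.1 = φ z.2).card) ≤ S.card + U.offDiag.card := by
    rw [← Finset.card_filter_add_card_filter_not
      (s := (S ×ˢ S).filter fun z => φ z.1 = φ z.2) (fun z => z.1.2 = z.2.2)]
    apply add_le_add
    · apply Finset.card_le_card_of_injOn (fun z => z.1)
      · rintro ⟨z1, z2⟩ hz
        simp only [Finset.coe_filter, Finset.mem_filter, Finset.mem_product, Set.mem_setOf_eq] at hz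
        exact hz.1.1.1
      · rintro ⟨⟨a1, c1⟩, ⟨b1, d1⟩⟩ hz ⟨⟨a2, c2⟩, ⟨b2, d2⟩⟩ hz' h
        simp only [Finset.coe_filter, Finset.mem_filter, Set.mem_setOf_eq, hφ, Prod.mk.injEq]
          at hz hz' h
        obtain ⟨⟨-, h5, -⟩, h6⟩ := hz
        obtain ⟨⟨-, h5', -⟩, h6'⟩ := hz'
        obtain ⟨rfl, rfl⟩ := h
        subst h6; subst h6'
        have := add_right_cancel (h5.symm.trans h5')
        simp [this]
    · apply Finset.card_le_card_of_injOn (fun z => (z.1.2, z.2.2))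
      · rintro ⟨z1, z2⟩ hz
        simp only [Finset.coe_filter, Finset.mem_filter, Finset.mem_product, Set.mem_setOf_eq, hS]
          at hz
        simp only [Finset.coe_offDiag, Set.mem_offDiag, Finset.mem_coe]
        exact ⟨hz.1.1.1.2, hz.1.1.2.2, hz.2⟩
      · rintro ⟨⟨a1, c1⟩, ⟨b1, d1⟩⟩ hz ⟨⟨a2, c2⟩, ⟨b2, d2⟩⟩ hz' h
        simp only [Finset.coe_filter, Finset.mem_filter, Set.mem_setOf_eq, hφ, Prod.mk.injEq]
          at hz hz' h
        obtain ⟨⟨-, h5, h6⟩, h7⟩ := hz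
        obtain ⟨⟨-, h5', h6'⟩, -⟩ := hz'
        obtain ⟨rfl, rfl⟩ := h
        have h8 : c1 - d1 ≠ 0 := sub_ne_zero.2 h7
        have ha : a1 = a2 := by
          apply mul_right_cancel₀ h8
          linear_combination -h6 + h6' + d1 * h5' - d1 * h5
        subst ha
        have hb : b1 = b2 := by linear_combination h5' - h5
        rw [hb]
  have h4 : ∀ y ∈ I, 3 * r y - r y ^ 2 ≤ 2 := by
    intro y _
    have : 0 ≤ (r y - 1) * (r y - 2) := by
      rcases le_or_gt (r y) 1 with h | h
      · exact mul_nonneg_of_nonpos_of_nonpos (by omega) (by omega)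
      · exact mul_nonneg (by omega) (by omega)
    nlinarith
  have h5 : 3 * (S.card : ℤ) - (S.card + U.offDiag.card : ℕ) ≤ 2 * I.card := by
    calc 3 * (S.card : ℤ) - (S.card + U.offDiag.card : ℕ)
        ≤ 3 * ∑ y ∈ I, r y - ∑ y ∈ I, r y ^ 2 := by
          rw [h1, h2]; have : (_ : ℤ) ≤ _ := Int.ofNat_le.2 h3; omega
      _ = ∑ y ∈ I, (3 * r y - r y ^ 2) := by rw [Finset.sum_sub_distrib, Finset.mul_sum]
      _ ≤ ∑ y ∈ I, 2 := Finset.sum_le_sum h4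
      _ = 2 * I.card := by simp [mul_comm]
  have hq : 1 ≤ Fintype.card F := Fintype.card_pos
  rw [Finset.offDiag_card, hS, Finset.card_product, hUc] at h5
  obtain ⟨u, hu⟩ : ∃ u, Fintype.card F = u + 1 := ⟨_, (Nat.sub_add_cancel hq).symm⟩
  rw [hu] at h5 ⊢
  simp only [Nat.add_sub_cancel] at h5 ⊢
  have hle : u ≤ u * u := Nat.le_mul_self u
  zify [hle] at h5 ⊢
  linarith


lemma comp_mem_D {k m : ℕ} (hk : 2 ≤ k) (hm : 2 ≤ m) {g h : F[X]} (hg : IsP k g) (hh : IsP m h) :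
    g.comp h ∈ Duniv F (k * m) := by
  refine ⟨hg.1.comp hh.1 (by rw [hh.2.1]; omega), ?_, ?_, g, h, ?_, ?_, rfl⟩
  · rw [natDegree_comp, hg.2.1, hh.2.1]
  · rw [eval_comp, ← coeff_zero_eq_eval_zero, hh.2.2, ← coeff_zero_eq_eval_zero, hg.2.2]
  · rw [hg.2.1]; exact hk
  · rw [hh.2.1]; exact hm

lemma D_finite (n : ℕ) : (Duniv F n).Finite := by
  refine (isP_finite n).subset ?_
  rintro f ⟨h1, h2, h3, -⟩
  exact ⟨h1, h2, by rw [coeff_zero_eq_eval_zero, h3]⟩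

lemma lower_of_injOn (S : Finset (F[X] × F[X])) (n : ℕ)
    (hS : ∀ z ∈ S, z.1.comp z.2 ∈ Duniv F n)
    (inj : ∀ z ∈ S, ∀ z' ∈ S, z.1.comp z.2 = z'.1.comp z'.2 → z = z') :
    S.card ≤ (Duniv F n).ncard := by
  rw [← Set.ncard_coe_finset]
  refine Set.ncard_le_ncard_of_injOn (fun z => z.1.comp z.2) (fun z hz => hS z (by simpa using hz))
    ?_ (D_finite n)
  intro z hz z' hz' h
  exact inj z (by simpa using hz) z' (by simpa using hz') h

lemma lower_tame {k m : ℕ} (hk : 2 ≤ k) (hm : 2 ≤ m) (hkF : (k : F) ≠ 0) :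
    Fintype.card F ^ (k + m - 2) ≤ (Duniv F (k * m)).ncard := by
  have := lower_of_injOn (PF F k ×ˢ PF F m) (k * m) (by
    rintro ⟨g, h⟩ hz
    simp only [Finset.mem_product, mem_PF] at hz
    exact comp_mem_D hk hm hz.1 hz.2) (by
    rintro ⟨g, h⟩ hz ⟨g', h'⟩ hz' e
    simp only [Finset.mem_product, mem_PF] at hz hz'
    obtain ⟨h1, h2⟩ := tame_inj (by omega) (by omega) hkF hz.1 hz'.1 hz.2 hz'.2 e
    rw [h1, h2])
  rw [Finset.card_product, card_PF (by omega), card_PF (by omega), ← pow_add] at this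
  convert this using 2
  omega

open scoped Classical in
/-- the pairs with prescribed second coefficients -/
noncomputable def BS (T : Finset (F × F)) (m p : ℕ) : Finset (F[X] × F[X]) :=
  T.biUnion fun t => QF m t.1 ×ˢ QF p t.2

lemma mem_BS {T : Finset (F × F)} {m p : ℕ} {g h : F[X]} : (g, h) ∈ BS T m p ↔
    IsP m g ∧ IsP p h ∧ (g.coeff (m - 1), h.coeff (p - 1)) ∈ T := by
  simp only [BS, Finset.mem_biUnion, Finset.mem_product, mem_QF]
  constructor
  · rintro ⟨⟨a, c⟩, ht, ⟨h1, h2⟩, h3, h4⟩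
    refine ⟨h1, h3, ?_⟩
    simp only at h2 h4
    rw [h2, h4]; exact ht
  · rintro ⟨h1, h2, h3⟩
    exact ⟨_, h3, ⟨h1, rfl⟩, h2, rfl⟩

lemma card_BS {T : Finset (F × F)} {m p : ℕ} (hm : 2 ≤ m) (hp : 2 ≤ p) :
    (BS T m p).card = T.card * (Fintype.card F ^ (m - 2) * Fintype.card F ^ (p - 2)) := by
  classical
  rw [BS, Finset.card_biUnion]
  · simp only [Finset.card_product, card_QF hm, card_QF hp, Finset.sum_const, smul_eq_mul]
  · rintro ⟨a, c⟩ _ ⟨a', c'⟩ _ hne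
    rw [Function.onFun, Finset.disjoint_left]
    rintro ⟨g, h⟩ h1 h2
    simp only [Finset.mem_product, mem_QF] at h1 h2
    apply hne
    rw [← h1.1.2, ← h1.2.2, ← h2.1.2, ← h2.2.2]

lemma BS_inj {p s : ℕ} [Fact p.Prime] [CharP F p] (hs : 1 ≤ s) {T : Finset (F × F)}
    (hT0 : ∀ t ∈ T, t.1 ≠ 0)
    (hT : Set.InjOn (fun t : F × F => (t.1 + ((s : F) * t.2) ^ p, - (t.1 * t.2))) T) :
    ∀ z ∈ BS T (p * s) p, ∀ z' ∈ BS T (p * s) p, z.1.comp z.2 = z'.1.comp z'.2 → z = z' := by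
  rintro ⟨g, h⟩ hz ⟨g', h'⟩ hz' e
  have hp : p.Prime := Fact.out
  rw [mem_BS] at hz hz'
  obtain ⟨h1, h2, h3⟩ := hz
  obtain ⟨h1', h2', h3'⟩ := hz'
  simp only at e
  have c1 := wildB_coeff hs h1 h2
  have c2 := wildB_coeff hs h1' h2'
  rw [← e] at c2
  have := hT h3 h3' (by
    simp only
    rw [← c1.1, ← c1.2, ← c2.1, ← c2.2])
  have ha := (Prod.mk.inj this).1
  obtain ⟨r1, r2⟩ := wildB_inj (dvd_mul_right p s) (Nat.mul_pos hp.pos hs) h1 h1' h2 h2'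
    (hT0 _ h3) ha e
  rw [r1, r2]

lemma exists_T (ψ : F → F) : ∃ T : Finset (F × F), (∀ t ∈ T, t.1 ≠ 0 ∧ t.2 ≠ 0) ∧
    Set.InjOn (fun t : F × F => (t.1 + ψ t.2, - (t.1 * t.2))) T ∧
    Fintype.card F * (Fintype.card F - 1) ≤ 2 * T.card := by
  classical
  have h := image_card (F := F) ψ
  set U := Finset.univ.filter fun x : F => x ≠ 0 with hU
  set φ : F × F → F × F := fun t => (t.1 + ψ t.2, - (t.1 * t.2)) with hφ
  obtain ⟨T, hT, hTi, hTe⟩ := Finset.exists_subset_injOn_image_eq_of_surjOn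
    (f := φ) ((U ×ˢ U : Finset (F × F)) : Set (F × F)) ((U ×ˢ U).image φ) (by
      rw [Finset.coe_image]; exact Set.surjOn_image _ _)
  refine ⟨T, ?_, hTi, ?_⟩
  · intro t ht
    have := hT ht
    simpa [hU] using this
  · rw [← hTe, Finset.card_image_of_injOn hTi] at h
    exact h

lemma lower_p2 {p : ℕ} [Fact p.Prime] [CharP F p] :
    Fintype.card F ^ (2 * p - 2) ≤ 2 * (Duniv F (p * p)).ncard := by
  classical
  have hp : p.Prime := Fact.out
  have hp2 := hp.two_le
  obtain ⟨T, hT0, hTi, hTc⟩ := exists_T (F := F) (fun c => (((1 : ℕ) : F) * c) ^ p)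
  set U := Finset.univ.filter fun x : F => x ≠ 0 with hU
  have hUc : U.card = Fintype.card F - 1 := by
    rw [hU, Finset.filter_ne', Finset.card_erase_of_mem (Finset.mem_univ _), Finset.card_univ]
  set T' := T ∪ U ×ˢ {0} with hT'
  have hT'c : T'.card = T.card + (Fintype.card F - 1) := by
    rw [hT', Finset.card_union_of_disjoint, Finset.card_product, hUc]
    · simp
    · rw [Finset.disjoint_left]
      rintro ⟨a, c⟩ h1 h2
      simp only [Finset.mem_product, Finset.mem_singleton] at h2
      exact (hT0 _ h1).2 h2.2
  have hmem : ∀ t ∈ T', t.1 ≠ 0 ∧ (t.2 ≠ 0 → t ∈ T) := by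
    rintro ⟨a, c⟩ ht
    rw [hT', Finset.mem_union] at ht
    rcases ht with ht | ht
    · exact ⟨(hT0 _ ht).1, fun _ => ht⟩
    · simp only [Finset.mem_product, Finset.mem_singleton, hU, Finset.mem_filter] at ht
      exact ⟨ht.1.2, fun h => absurd ht.2 h⟩
  have hinj : Set.InjOn (fun t : F × F => (t.1 + (((1 : ℕ) : F) * t.2) ^ p, - (t.1 * t.2))) T' := by
    rintro ⟨a, c⟩ h1 ⟨a', c'⟩ h2 e
    obtain ⟨x1, x2⟩ := hmem _ h1
    obtain ⟨y1, y2⟩ := hmem _ h2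
    simp only at x1 x2 y1 y2
    by_cases hc : c = 0
    · subst hc
      simp only [Prod.mk.injEq, neg_inj, mul_zero] at e
      have hc' : c' = 0 := (mul_eq_zero.1 e.2.symm).resolve_left y1
      subst hc'
      have := add_right_cancel (e.1.trans (by simp : _ = a' + (0 : F) ^ p))
      rw [this]
    · have hc' : c' ≠ 0 := by
        rintro rfl
        simp only [Prod.mk.injEq, neg_inj, mul_zero] at e
        exact mul_ne_zero x1 hc e.2
      exact hTi (x2 hc) (y2 hc') e
  have key := lower_of_injOn (BS T' (p * 1) p) (p * 1 * p) (by
    rintro ⟨g, h⟩ hz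
    rw [mem_BS] at hz
    exact comp_mem_D (by omega) (by omega) hz.1 hz.2.1)
    (BS_inj le_rfl (fun t ht => (hmem t ht).1) hinj)
  rw [mul_one, card_BS hp2 hp2, hT'c] at key
  have hq : 2 ≤ Fintype.card F := Fintype.one_lt_card
  generalize (Duniv F (p * p)).ncard = D at *
  obtain ⟨u, hu⟩ : ∃ u, Fintype.card F = u + 2 := ⟨Fintype.card F - 2, by omega⟩
  have e1 : Fintype.card F ^ (2 * p - 2) =
      Fintype.card F ^ 2 * (Fintype.card F ^ (p - 2) * Fintype.card F ^ (p - 2)) := by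
    rw [← pow_add, ← pow_add]; congr 1; omega
  rw [e1]
  have e2 : Fintype.card F ^ 2 ≤ 2 * (T.card + (Fintype.card F - 1)) := by
    rw [hu] at hTc ⊢
    simp only [Nat.add_sub_cancel, show u + 2 - 1 = u + 1 by omega] at hTc ⊢
    nlinarith
  calc _ ≤ 2 * (T.card + (Fintype.card F - 1)) *
        (Fintype.card F ^ (p - 2) * Fintype.card F ^ (p - 2)) := Nat.mul_le_mul_right _ e2
    _ = 2 * ((T.card + (Fintype.card F - 1)) *
        (Fintype.card F ^ (p - 2) * Fintype.card F ^ (p - 2))) := by ring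
    _ ≤ 2 * D := Nat.mul_le_mul_left _ key

lemma lower_wild {p s : ℕ} [Fact p.Prime] [CharP F p] (hs : 2 ≤ s)
    (hcop : (p - 1).Coprime (p * s)) :
    Fintype.card F ^ (p + p * s - 2) ≤ (Duniv F (p * (p * s))).ncard := by
  classical
  have hp : p.Prime := Fact.out
  have hp2 := hp.two_le
  have hps : p * 2 ≤ p * s := Nat.mul_le_mul_left p hs
  obtain ⟨T, hT0, hTi, hTc⟩ := exists_T (F := F) (fun c => ((s : F) * c) ^ p)
  set A1 : Finset (F[X] × F[X]) := {X ^ p} ×ˢ PF F (p * s) with hA1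
  set A2 : Finset (F[X] × F[X]) := ((PF F p).erase (X ^ p)) ×ˢ (PF F (p * s) \ QF (p * s) 0) with hA2
  set B := BS T (p * s) p with hB
  have hmA : ∀ g h, (g, h) ∈ A1 ∪ A2 → IsP p g ∧ IsP (p * s) h ∧
      (g = X ^ p ∨ h.coeff (p * s - 1) ≠ 0) := by
    intro g h hz
    rw [Finset.mem_union] at hz
    rcases hz with hz | hz
    · simp only [hA1, Finset.mem_product, Finset.mem_singleton, mem_PF] at hz
      exact ⟨hz.1 ▸ isP_X_pow (by omega), hz.2, Or.inl hz.1⟩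
    · simp only [hA2, Finset.mem_product, Finset.mem_erase, Finset.mem_sdiff, mem_PF, mem_QF] at hz
      exact ⟨hz.1.2, hz.2.1, Or.inr fun h0 => hz.2.2 ⟨hz.2.1, h0⟩⟩
  have hmB : ∀ g h, (g, h) ∈ B → IsP (p * s) g ∧ IsP p h ∧
      g.coeff (p * s - 1) ≠ 0 ∧ h.coeff (p - 1) ≠ 0 := by
    intro g h hz
    rw [hB, mem_BS] at hz
    exact ⟨hz.1, hz.2.1, hT0 _ hz.2.2⟩
  have key := lower_of_injOn ((A1 ∪ A2) ∪ B) (p * (p * s)) (by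
    rintro ⟨g, h⟩ hz
    rcases Finset.mem_union.1 hz with hz | hz
    · obtain ⟨h1, h2, -⟩ := hmA _ _ hz
      exact comp_mem_D hp2 (by omega) h1 h2
    · obtain ⟨h1, h2, -⟩ := hmB _ _ hz
      rw [mul_comm]
      exact comp_mem_D (by omega) hp2 h1 h2) (by
    rintro ⟨g, h⟩ hz ⟨g', h'⟩ hz' e
    rcases Finset.mem_union.1 hz with hz | hz
    · obtain ⟨h1, h2, h3⟩ := hmA _ _ hz
      rcases Finset.mem_union.1 hz' with hz' | hz'
      · obtain ⟨h1', h2', h3'⟩ := hmA _ _ hz'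
        obtain ⟨r1, r2⟩ := wildA_inj (dvd_mul_right p s) (by omega) hcop h1 h1' h2 h2' h3 h3' e
        rw [r1, r2]
      · obtain ⟨h1', h2', h3', h4'⟩ := hmB _ _ hz'
        exact absurd e.symm (wild_disj hs h1' h2' h1 h2 h3' h4')
    · rcases Finset.mem_union.1 hz' with hz' | hz'
      · obtain ⟨h1, h2, h3, h4⟩ := hmB _ _ hz
        obtain ⟨h1', h2', h3'⟩ := hmA _ _ hz'
        exact absurd e (wild_disj hs h1 h2 h1' h2' h3 h4)
      · exact BS_inj (by omega) (fun t ht => (hT0 t ht).1) hTi _ hz _ hz' e)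
  have hcard : ((A1 ∪ A2) ∪ B).card = A1.card + A2.card + B.card := by
    rw [Finset.card_union_of_disjoint, Finset.card_union_of_disjoint]
    · rw [Finset.disjoint_left]
      rintro ⟨g, h⟩ h1 h2
      simp only [hA1, hA2, Finset.mem_product, Finset.mem_singleton, Finset.mem_erase] at h1 h2
      exact h2.1.1 h1.1
    · rw [Finset.disjoint_left]
      rintro ⟨g, h⟩ h1 h2
      have x1 := (hmA _ _ h1).1.2.1
      have x2 := (hmB _ _ h2).1.2.1
      omega
  have hsub : QF (p * s) (0 : F) ⊆ PF F (p * s) := by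
    intro f hf
    rw [mem_QF] at hf; rw [mem_PF]; exact hf.1
  rw [hcard, hA1, hA2, hB, card_BS (by omega) hp2, Finset.card_product, Finset.card_product,
    Finset.card_singleton, Finset.card_sdiff_of_subset hsub, card_QF (by omega),
    Finset.card_erase_of_mem (mem_PF.2 (isP_X_pow (by omega))), card_PF (by omega),
    card_PF (by omega)] at key
  refine le_trans ?_ key
  have hq : 2 ≤ Fintype.card F := Fintype.one_lt_card
  have hqp : Fintype.card F = 2 → p = 2 := by
    intro h2
    have h0 : ((2 : ℕ) : F) = 0 := by rw [← h2]; exact FiniteField.cast_card_eq_zero F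
    rw [CharP.cast_eq_zero_iff F p] at h0
    exact (Nat.prime_dvd_prime_iff_eq hp Nat.prime_two).1 h0
  generalize Fintype.card F = q at *
  obtain ⟨i, hi⟩ : ∃ i, p = i + 2 := ⟨p - 2, by omega⟩
  obtain ⟨j, hj⟩ : ∃ j, p * s = j + 2 := ⟨p * s - 2, by omega⟩
  rw [hj, hi]
  simp only [Nat.add_sub_cancel, show i + 2 - 1 = i + 1 by omega, show j + 2 - 1 = j + 1 by omega,
    show i + 2 + (j + 2) - 2 = i + j + 2 by omega, pow_succ, pow_add, one_mul, pow_zero]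
  have hb : 1 ≤ q ^ i := Nat.one_le_pow _ _ (by omega)
  have hT2 : q * q ^ i ≤ T.card * q ^ i + 1 := by
    rcases hq.eq_or_lt with h | h
    · have := hqp h.symm
      have hi0 : i = 0 := by omega
      rw [← h] at hTc ⊢
      subst hi0
      simp at hTc ⊢
      omega
    · have : q ≤ T.card := by
        obtain ⟨u, hu⟩ : ∃ u, q = u + 3 := ⟨q - 3, by omega⟩
        rw [hu, show u + 3 - 1 = u + 2 by omega] at hTc
        nlinarith
      nlinarith
  generalize q ^ i = b at *
  generalize q ^ j = a at *
  obtain ⟨u, hu⟩ : ∃ u, q = u + 1 := ⟨q - 1, by omega⟩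
  obtain ⟨v, hv⟩ : ∃ v, b * q = v + 1 := ⟨b * q - 1, by
    have : 0 < b * q := by positivity
    omega⟩
  have e1 : a * q - a = a * u := by rw [hu, mul_add, mul_one, Nat.add_sub_cancel]
  rw [e1, hv, Nat.add_sub_cancel]
  have e3 : a * (q * b) ≤ a * (T.card * b + 1) := Nat.mul_le_mul_left _ hT2
  have e4 : v * u + v + u + 1 = b * q * q := by rw [hv, hu]; ring
  have : a * b * q * q = a * (v * u + v + u + 1) := by rw [e4]; ring
  have e5 : a * (q * b) = a * v + a := by rw [mul_comm q b, hv]; ring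
  rw [hu] at *
  nlinarith

open scoped Classical in
lemma D_subset {n : ℕ} (hn : 4 ≤ n) : Duniv F n ⊆
    ((n.divisors.filter fun d => 1 < d ∧ d < n).biUnion fun d =>
      (PF F d ×ˢ PF F (n / d)).image fun z => z.1.comp z.2 : Finset F[X]) := by
  rintro f ⟨hf, hfn, hf0, g, h, hg, hh, rfl⟩
  have hlc : h.leadingCoeff ≠ 0 := by
    rw [Ne, leadingCoeff_eq_zero]; rintro rfl; simp at hh
  set b := h.leadingCoeff with hb
  set h' : F[X] := C b⁻¹ * (h - C (h.coeff 0)) with hh'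
  set g' : F[X] := g.comp (C b * X + C (h.coeff 0)) with hg'
  have hcomp : g'.comp h' = g.comp h := by
    rw [hg', comp_assoc]
    congr 1
    simp only [add_comp, mul_comp, C_comp, X_comp, hh']
    rw [← mul_assoc, ← C_mul, mul_inv_cancel₀ hlc]; simp
  have hd1 : (h - C (h.coeff 0)).natDegree = h.natDegree := natDegree_sub_C
  have hd : h'.natDegree = h.natDegree := by
    rw [hh', natDegree_C_mul (inv_ne_zero hlc), hd1]
  have hm : h'.Monic := by
    rw [Monic, hh', leadingCoeff_mul, leadingCoeff_C, leadingCoeff, hd1, coeff_sub, coeff_C,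
      if_neg (by omega), sub_zero]
    exact inv_mul_cancel₀ hlc
  have hP : IsP h.natDegree h' := ⟨hm, hd, by simp [hh']⟩
  have hgd : g'.natDegree = g.natDegree := by
    rw [hg', natDegree_comp, natDegree_linear hlc, mul_one]
  have hgm : g'.Monic := by
    have : (g'.comp h').leadingCoeff = 1 := by rw [hcomp]; exact hf
    rw [leadingCoeff_comp (by omega), hm.leadingCoeff, one_pow, mul_one] at this
    exact this
  have hgP : IsP g.natDegree g' := by
    refine ⟨hgm, hgd, ?_⟩
    rw [← hcomp, eval_comp, ← coeff_zero_eq_eval_zero h', hP.2.2, ← coeff_zero_eq_eval_zero] at hf0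
    exact hf0
  rw [natDegree_comp] at hfn
  simp only [Finset.coe_biUnion, Set.mem_iUnion, Finset.mem_coe, Finset.mem_filter,
    Nat.mem_divisors, Finset.mem_image, Finset.mem_product, mem_PF]
  refine ⟨g.natDegree, ⟨⟨⟨_, hfn.symm⟩, by omega⟩, by omega, ?_⟩, (g', h'), ⟨hgP, ?_⟩, hcomp⟩
  · rw [← hfn]; nlinarith
  · rw [← hfn, Nat.mul_div_cancel_left _ (by omega)]; exact hP

lemma D_card_le {n : ℕ} (hn : 4 ≤ n) : (Duniv F n).ncard ≤
    ∑ d ∈ n.divisors.filter (fun d => 1 < d ∧ d < n), Fintype.card F ^ (d + n / d - 2) := by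
  classical
  refine (Set.ncard_le_ncard (D_subset hn) (Finset.finite_toSet _)).trans ?_
  rw [Set.ncard_coe_finset]
  refine Finset.card_biUnion_le.trans (Finset.sum_le_sum fun d hd => ?_)
  simp only [Finset.mem_filter, Nat.mem_divisors] at hd
  obtain ⟨⟨⟨c, rfl⟩, -⟩, h1, h2⟩ := hd
  have hc : 1 ≤ c := by
    rcases Nat.eq_zero_or_pos c with h | h
    · subst h; simp at h2
    · exact h
  rw [Nat.mul_div_cancel_left _ (by omega)]
  refine Finset.card_image_le.trans ?_
  rw [Finset.card_product, card_PF (by omega), card_PF hc, ← pow_add]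
  exact le_of_eq (by congr 1; omega)

end helpers

lemma gap_bound {l d c n : ℕ} (hn : n = d * c) (hl : n.minFac = l) (hn4 : 4 ≤ n) (hld : l < d)
    (hdc : d ≤ c) (h12 : n ≠ 12) (h16 : n ≠ 16) (h18 : n ≠ 18) :
    3 * l ^ 2 * (d + c + 1) + d * c ≤ 3 * l ^ 3 + 3 * l * (d * c) := by
  have hlp : l.Prime := hl ▸ Nat.minFac_prime (by omega)
  have hl2 := hlp.two_le
  have hln : l ∣ d * c := by rw [← hn, ← hl]; exact Nat.minFac_dvd n
  have hmin : ∀ k, 2 ≤ k → k ∣ n → l ≤ k := fun k hk hkn => hl ▸ Nat.minFac_le_of_dvd hk hkn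
  by_cases h2 : 2 * l ≤ d
  · obtain ⟨x, rfl⟩ := Nat.exists_eq_add_of_le h2
    obtain ⟨y, rfl⟩ := Nat.exists_eq_add_of_le (h2.trans hdc)
    rcases hl2.eq_or_lt with h | h
    · rw [← h] at hn ⊢
      have : x + y ≠ 0 := by
        intro h0
        have hx : x = 0 := by omega
        have hy : y = 0 := by omega
        subst hx; subst hy; simp at hn; omega
      have h1 : 1 ≤ x + y := by omega
      nlinarith [Nat.zero_le (x * y)]
    · have e1 : 0 ≤ l * (x + y) := Nat.zero_le _
      obtain ⟨z, rfl⟩ : ∃ z, l = z + 3 := ⟨l - 3, by omega⟩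
      zify
      have : (0 : ℤ) ≤ 3 * (z + 3) ^ 3 - 7 * (z + 3) ^ 2 + (3 * (z + 3) ^ 2 - 2 * (z + 3)) * (x + y)
          + (3 * (z + 3) - 1) * (x * y) := by
        ring_nf; positivity
      nlinarith
  · have hnd : ¬ l ∣ d := by
      rintro ⟨k, rfl⟩
      have : k < 2 := by
        by_contra hk
        exact h2 (by nlinarith)
      have : 1 < k := by
        by_contra hk
        have : k ≤ 1 := by omega
        nlinarith
      omega
    obtain ⟨b, rfl⟩ := (hlp.dvd_mul.1 hln).resolve_left hnd
    have hb2 : 2 ≤ b := by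
      by_contra hb
      have : b ≤ 1 := by omega
      nlinarith
    have hbl : l ≤ b := hmin b hb2 (by rw [hn]; exact ⟨d * l, by ring⟩)
    obtain ⟨t, rfl⟩ := Nat.exists_eq_add_of_le hld.le
    rcases hl2.eq_or_lt with h | h
    · rw [← h] at hn h2 hld ⊢
      have ht : t = 1 := by omega
      subst ht
      have : 4 ≤ b := by
        by_contra hb
        interval_cases b <;> omega
      omega
    · have ht : 2 ≤ t := by
        by_contra ht
        have ht1 : t = 1 := by omega
        subst ht1
        have hodd := hlp.eq_two_or_odd'.resolve_left (by omega)
        have : 2 ∣ l + 1 := (hodd.add_odd odd_one).two_dvd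
        have := hmin 2 le_rfl (by rw [hn]; exact this.mul_right _)
        omega
      obtain ⟨z, rfl⟩ : ∃ z, l = z + 3 := ⟨l - 3, by omega⟩
      obtain ⟨y, rfl⟩ : ∃ y, t = y + 2 := ⟨t - 2, by omega⟩
      obtain ⟨x, rfl⟩ : ∃ x, b = x + 3 := ⟨b - 3, by omega⟩
      zify
      have : (0 : ℤ) ≤ (z + 3) * (3 * (z + 3) * (y + 2) * (x + 2) - ((z + 3) + (y + 2)) * (x + 3)
          - 3 * (z + 3)) := by
        ring_nf; positivity
      nlinarith

lemma expo_inj {n d d' : ℕ} (hd : d ∣ n) (hd' : d' ∣ n) (hn : 0 < n)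
    (h1 : d * d ≤ n) (h2 : d' * d' ≤ n) (e : d + n / d = d' + n / d') : d = d' := by
  obtain ⟨c, rfl⟩ := hd
  obtain ⟨c', hc'⟩ := hd'
  have hd0 : 0 < d := by
    rcases Nat.eq_zero_or_pos d with h | h
    · subst h; simp at hn
    · exact h
  have hd0' : 0 < d' := by
    rcases Nat.eq_zero_or_pos d' with h | h
    · rw [h, zero_mul] at hc'; omega
    · exact h
  rw [Nat.mul_div_cancel_left _ hd0] at e
  rw [hc', Nat.mul_div_cancel_left _ hd0'] at e
  rw [hc'] at h2
  have x1 := Nat.le_of_mul_le_mul_left h1 hd0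
  have x2 := Nat.le_of_mul_le_mul_left h2 hd0'
  zify at *
  have : ((d : ℤ) - d') * (d - c') = 0 := by
    linear_combination (d : ℤ) * e - hc'
  rcases mul_eq_zero.1 this with h | h <;> omega

lemma exists_M {n q : ℕ} (hq : 2 ≤ q) (hn : 4 ≤ n) (hcomp : ¬ n.Prime) :
    ∃ M : ℕ, ∑ d ∈ n.divisors.filter (fun d => n.minFac < d ∧ d * d ≤ n), q ^ (d + n / d - 2)
      ≤ q ^ M ∧ 3 * n.minFac ^ 2 * M + n ≤ 3 * n.minFac ^ 2 * (n.minFac + n / n.minFac - 2) := by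
  have hlp : n.minFac.Prime := Nat.minFac_prime (by omega)
  have hl2 := hlp.two_le
  obtain ⟨m, hm⟩ := Nat.minFac_dvd n
  have hdiv : n / n.minFac = m := by
    exact Nat.div_eq_of_eq_mul_right hlp.pos hm
  by_cases h12 : n = 12
  · refine ⟨5, ?_, ?_⟩
    · rw [show n.divisors.filter (fun d => n.minFac < d ∧ d * d ≤ n) = {3} by
        subst h12; rw [show Nat.minFac 12 = 2 by norm_num]; decide, Finset.sum_singleton, h12]
    · subst h12; norm_num
  by_cases h16 : n = 16
  · refine ⟨6, ?_, ?_⟩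
    · rw [show n.divisors.filter (fun d => n.minFac < d ∧ d * d ≤ n) = {4} by
        subst h16; rw [show Nat.minFac 16 = 2 by norm_num]; decide, Finset.sum_singleton, h16]
    · subst h16; norm_num
  by_cases h18 : n = 18
  · refine ⟨7, ?_, ?_⟩
    · rw [show n.divisors.filter (fun d => n.minFac < d ∧ d * d ≤ n) = {3} by
        subst h18; rw [show Nat.minFac 18 = 2 by norm_num]; decide, Finset.sum_singleton, h18]
    · subst h18; norm_num
  set S := n.divisors.filter (fun d => n.minFac < d ∧ d * d ≤ n) with hS
  have hSm : ∀ d ∈ S, d ∣ n ∧ n.minFac < d ∧ d * d ≤ n := by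
    intro d hd
    simp only [hS, Finset.mem_filter, Nat.mem_divisors] at hd
    exact ⟨hd.1.1, hd.2⟩
  rcases S.eq_empty_or_nonempty with hE | hE
  · refine ⟨0, by rw [hE]; simp, ?_⟩
    rw [hdiv]
    generalize n.minFac = l at *
    have : m ≤ l + m - 2 := by omega
    calc 3 * l ^ 2 * 0 + n = l * m := by rw [mul_zero, zero_add, hm]
      _ ≤ 3 * l ^ 2 * m := Nat.mul_le_mul_right _ (by nlinarith)
      _ ≤ _ := Nat.mul_le_mul_left _ this
  · obtain ⟨d, hdS, hmax⟩ := S.exists_max_image (fun d => d + n / d - 2) hE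
    refine ⟨d + n / d - 2 + 1, ?_, ?_⟩
    · have hinj : Set.InjOn (fun d => d + n / d - 2) S := by
        intro x hx y hy e
        obtain ⟨a1, a2, a3⟩ := hSm x hx
        obtain ⟨b1, b2, b3⟩ := hSm y hy
        simp only at e
        refine expo_inj a1 b1 (by omega) a3 b3 ?_
        generalize n / x = u at *
        generalize n / y = v at *
        omega
      rw [← Finset.sum_image (f := fun k => q ^ k) hinj]
      refine (Nat.geomSum_lt hq ?_).le
      intro k hk
      obtain ⟨x, hx, rfl⟩ := Finset.mem_image.1 hk
      exact Nat.lt_succ_of_le (hmax x hx)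
    · obtain ⟨⟨c, hc⟩, a2, a3⟩ := hSm d hdS
      have hd0 : 0 < d := by omega
      have hcd : n / d = c := by rw [hc, Nat.mul_div_cancel_left _ hd0]
      have hdc : d ≤ c := by rw [hc] at a3; exact Nat.le_of_mul_le_mul_left a3 hd0
      have key := gap_bound hc rfl hn a2 hdc h12 h16 h18
      rw [hcd, hdiv]
      generalize hl : n.minFac = l at *
      rw [← hc] at key
      obtain ⟨u, hu⟩ : ∃ u, d + c = u + 2 := ⟨d + c - 2, by omega⟩
      obtain ⟨v, hv⟩ : ∃ v, l = v + 2 := ⟨l - 2, by omega⟩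
      rw [hu, show l + m - 2 = v + m by omega, Nat.add_sub_cancel]
      rw [hu] at key
      have e1 : 3 * l * n = 3 * l ^ 2 * m := by rw [hm]; ring
      rw [e1] at key
      have e2 : 3 * l ^ 3 = 3 * l ^ 2 * (v + 2) := by rw [← hv]; ring
      rw [e2] at key
      linarith

lemma sum_half {n : ℕ} (f : ℕ → ℕ) (hf : ∀ d, d ∣ n → f (n / d) = f d) (hn : 0 < n) :
    ∑ d ∈ n.divisors.filter (fun d => 1 < d ∧ d < n), f d ≤
      2 * ∑ d ∈ n.divisors.filter (fun d => 1 < d ∧ d * d ≤ n), f d := by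
  rw [two_mul, ← Finset.sum_filter_add_sum_filter_not _ (fun d => d * d ≤ n)]
  apply add_le_add
  · apply Finset.sum_le_sum_of_subset
    intro d hd
    simp only [Finset.mem_filter] at hd ⊢
    exact ⟨hd.1.1, hd.1.2.1, hd.2⟩
  · have hmem : ∀ d ∈ (n.divisors.filter (fun d => 1 < d ∧ d < n)).filter (fun d => ¬ d * d ≤ n),
        ∃ c, n = d * c ∧ n / d = c ∧ n / c = d ∧ 1 < c ∧ c * c ≤ n := by
      intro d hd
      simp only [Finset.mem_filter, Nat.mem_divisors] at hd
      obtain ⟨⟨⟨⟨c, hc⟩, -⟩, h1, h2⟩, h3⟩ := hd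
      have hc1 : 1 < c := by
        by_contra h
        have : c ≤ 1 := by omega
        nlinarith
      refine ⟨c, hc, ?_, ?_, hc1, ?_⟩
      · rw [hc, Nat.mul_div_cancel_left _ (by omega)]
      · rw [hc, Nat.mul_div_cancel _ (by omega)]
      · nlinarith
    rw [Finset.sum_congr rfl (g := fun d => f (n / d)) (fun d hd => (hf d
      (Nat.dvd_of_mem_divisors (Finset.mem_filter.1 (Finset.mem_filter.1 hd).1).1)).symm),
      ← Finset.sum_image (g := fun d => n / d) (f := fun c => f c)]
    · apply Finset.sum_le_sum_of_subset
      intro x hx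
      obtain ⟨d, hd, rfl⟩ := Finset.mem_image.1 hx
      obtain ⟨c, h1, h2, h3, h4, h5⟩ := hmem d hd
      simp only [h2, Finset.mem_filter, Nat.mem_divisors]
      exact ⟨⟨⟨d, by rw [h1, mul_comm]⟩, by omega⟩, h4, h5⟩
    · intro x hx y hy e
      obtain ⟨c, h1, h2, h3, h4, h5⟩ := hmem x hx
      obtain ⟨c', h1', h2', h3', h4', h5'⟩ := hmem y hy
      simp only at e
      rw [h2, h2'] at e
      rw [← h3, ← h3', e]

lemma upper_nat {n q : ℕ} (hn : 4 ≤ n) (hcomp : ¬ n.Prime) :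
    ∑ d ∈ n.divisors.filter (fun d => 1 < d ∧ d < n), q ^ (d + n / d - 2) ≤
      2 * (q ^ (n.minFac + n / n.minFac - 2) +
        ∑ d ∈ n.divisors.filter (fun d => n.minFac < d ∧ d * d ≤ n), q ^ (d + n / d - 2)) := by
  refine (sum_half (fun d => q ^ (d + n / d - 2)) ?_ (by omega)).trans ?_
  · intro d hd
    rw [Nat.div_div_self hd (by omega), add_comm]
  · apply Nat.mul_le_mul_left
    have hsub : n.divisors.filter (fun d => 1 < d ∧ d * d ≤ n) ⊆
        insert n.minFac (n.divisors.filter (fun d => n.minFac < d ∧ d * d ≤ n)) := by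
      intro d hd
      simp only [Finset.mem_insert, Finset.mem_filter] at hd ⊢
      have := Nat.minFac_le_of_dvd hd.2.1 (Nat.dvd_of_mem_divisors hd.1)
      rcases this.eq_or_lt with h | h
      · exact Or.inl h.symm
      · exact Or.inr ⟨hd.1, h, hd.2.2⟩
    refine (Finset.sum_le_sum_of_subset hsub).trans ?_
    rw [Finset.sum_insert (by simp)]

lemma upper_sq {n q : ℕ} (hn : 4 ≤ n) (hsq : n = n.minFac ^ 2) :
    ∑ d ∈ n.divisors.filter (fun d => 1 < d ∧ d < n), q ^ (d + n / d - 2) ≤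
      q ^ (2 * n.minFac - 2) := by
  have hlp : n.minFac.Prime := Nat.minFac_prime (by omega)
  generalize n.minFac = l at *
  have hsub : n.divisors.filter (fun d => 1 < d ∧ d < n) ⊆ {l} := by
    intro d hd
    simp only [Finset.mem_filter, Nat.mem_divisors, Finset.mem_singleton] at hd ⊢
    obtain ⟨⟨h1, -⟩, h2, h3⟩ := hd
    rw [hsq, Nat.dvd_prime_pow hlp] at h1
    obtain ⟨k, hk, rfl⟩ := h1
    interval_cases k
    · simp at h2
    · simp
    · omega
  refine (Finset.sum_le_sum_of_subset hsub).trans ?_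
  rw [Finset.sum_singleton, hsq, pow_two, Nat.mul_div_cancel _ hlp.pos, two_mul]

theorem stmt14 (q : ℕ) (F : Type) [Field F] [Fintype F] (hq : Fintype.card F = q)
    (n : ℕ) (hn : 4 ≤ n) (hcomp : ¬ n.Prime) :
    alphaN q n / 2 ≤ (Set.ncard (Duniv F n) : ℝ) ∧
    (Set.ncard (Duniv F n) : ℝ) ≤
      alphaN q n * (1 + (q : ℝ) ^ (-(n : ℝ) / (3 * (n.minFac : ℝ) ^ 2))) := by
  have hlp : n.minFac.Prime := Nat.minFac_prime (by omega)
  have hl2 := hlp.two_le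
  have hq2 : 2 ≤ q := hq ▸ Fintype.one_lt_card
  have hq0 : (0 : ℝ) < q := by positivity
  have hq1 : (1 : ℝ) ≤ q := by exact_mod_cast (by omega : 1 ≤ q)
  obtain ⟨m, hm⟩ := Nat.minFac_dvd n
  have hdiv : n / n.minFac = m := by
    exact Nat.div_eq_of_eq_mul_right hlp.pos hm
  have hm2 : 2 ≤ m := by
    by_contra h
    have : m = 0 ∨ m = 1 := by omega
    rcases this with h | h
    · rw [h] at hm; omega
    · rw [h, mul_one] at hm; exact hcomp (hm ▸ hlp)
  constructor
  · -- lower bound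
    have tame : q ^ (n.minFac + m - 2) ≤ (Duniv F n).ncard → 
        alphaN q n / 2 ≤ ((Duniv F n).ncard : ℝ) := by
      intro h
      have h' : (q : ℝ) ^ (n.minFac + m - 2) ≤ ((Duniv F n).ncard : ℝ) := by exact_mod_cast h
      rw [alphaN, hdiv]
      split_ifs with hsq
      · have : m = n.minFac := by
          apply Nat.eq_of_mul_eq_mul_left hlp.pos
          rw [← hm, ← pow_two]; exact hsq
        rw [this, ← two_mul] at h'
        have : (0 : ℝ) < (q : ℝ) ^ (2 * n.minFac - 2) := by positivity
        linarith
      · linarith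
    by_cases h1 : (n.minFac : F) ≠ 0
    · apply tame
      have := lower_tame (F := F) hl2 hm2 h1
      rw [hq, ← hm] at this
      exact this
    by_cases h2 : (m : F) ≠ 0
    · apply tame
      have := lower_tame (F := F) hm2 hl2 h2
      rw [hq, mul_comm, ← hm, add_comm] at this
      exact this
    push Not at h1 h2
    obtain ⟨p, hp⟩ := CharP.exists F
    have hpp : p.Prime := (CharP.char_is_prime_or_zero F p).resolve_right (by
      rintro rfl
      have := (CharP.cast_eq_zero_iff F 0 _).1 h1
      simp at this; omega)
    have : Fact p.Prime := ⟨hpp⟩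
    have hpl : p = n.minFac :=
      (Nat.prime_dvd_prime_iff_eq hpp hlp).1 ((CharP.cast_eq_zero_iff F p _).1 h1)
    obtain ⟨s, rfl⟩ := (CharP.cast_eq_zero_iff F p _).1 h2
    rcases (show s = 0 ∨ s = 1 ∨ 2 ≤ s by omega) with hs | hs | hs
    · subst hs; simp at hm2
    · subst hs
      have := lower_p2 (F := F) (p := p)
      rw [hq] at this
      rw [← hpl, mul_one] at hm
      rw [alphaN, if_pos (by rw [← hpl, pow_two]; exact hm), ← hpl]
      rw [← hm] at this
      have h' : (q : ℝ) ^ (2 * p - 2) ≤ 2 * ((Duniv F n).ncard : ℝ) := by exact_mod_cast this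
      linarith
    · apply tame
      have hcop : (p - 1).Coprime (p * s) := by
        apply Nat.Coprime.symm
        rw [Nat.coprime_iff_gcd_eq_one]
        by_contra hg
        have hr := Nat.minFac_prime hg
        have hr1 := (Nat.minFac_dvd ((p * s).gcd (p - 1))).trans (Nat.gcd_dvd_left _ _)
        have hr2 := (Nat.minFac_dvd ((p * s).gcd (p - 1))).trans (Nat.gcd_dvd_right _ _)
        have a1 := Nat.le_of_dvd (by have := hpp.two_le; omega) hr2
        have a2 := Nat.minFac_le_of_dvd hr.two_le (by rw [hm]; exact hr1.mul_left _ :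
          Nat.minFac ((p * s).gcd (p - 1)) ∣ n)
        have := hpp.two_le
        omega
      have := lower_wild (F := F) hs hcop
      rw [hq] at this
      rw [← hpl] at hm ⊢
      rw [← hm] at this
      exact this
  · -- upper bound
    have hD := D_card_le (F := F) hn
    rw [hq] at hD
    have hpos : (0 : ℝ) < (q : ℝ) ^ (-(n : ℝ) / (3 * (n.minFac : ℝ) ^ 2)) := Real.rpow_pos_of_pos hq0 _
    rw [alphaN]
    split_ifs with hsq
    · have h1 : ((Duniv F n).ncard : ℝ) ≤ (q : ℝ) ^ (2 * n.minFac - 2) := by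
        exact_mod_cast hD.trans (upper_sq hn hsq)
      have h2 : (0 : ℝ) < (q : ℝ) ^ (2 * n.minFac - 2) := by positivity
      nlinarith
    · obtain ⟨M, hM1, hM2⟩ := exists_M hq2 hn hcomp
      have h1 : (Duniv F n).ncard ≤ 2 * (q ^ (n.minFac + n / n.minFac - 2) + q ^ M) :=
        hD.trans ((upper_nat hn hcomp).trans (by omega))
      have h1' : ((Duniv F n).ncard : ℝ) ≤
          2 * ((q : ℝ) ^ (n.minFac + n / n.minFac - 2) + (q : ℝ) ^ M) := by exact_mod_cast h1
      generalize n.minFac + n / n.minFac - 2 = e0 at *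
      have h3 : (q : ℝ) ^ M ≤ (q : ℝ) ^ e0 * (q : ℝ) ^ (-(n : ℝ) / (3 * (n.minFac : ℝ) ^ 2)) := by
        rw [← Real.rpow_natCast, ← Real.rpow_natCast, ← Real.rpow_add hq0]
        apply Real.rpow_le_rpow_of_exponent_le hq1
        have hl0 : (0 : ℝ) < 3 * (n.minFac : ℝ) ^ 2 := by
          have : (0 : ℝ) < n.minFac := by exact_mod_cast hlp.pos
          positivity
        have hM3 : 3 * (n.minFac : ℝ) ^ 2 * M + n ≤ 3 * (n.minFac : ℝ) ^ 2 * e0 := by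
          exact_mod_cast hM2
        have : (n : ℝ) / (3 * (n.minFac : ℝ) ^ 2) ≤ e0 - M := by
          rw [div_le_iff₀ hl0]; linarith
        rw [neg_div]; linarith
      linarith
end

section
/- Let F_q be a finite field with q elements and characteristic p, let n ≥ 4 be a composite integer with smallest prime divisor ℓ, and define α_n = 2·q^{ℓ + n/ℓ − 2} if n ≠ ℓ², and α_n = q^{2ℓ − 2} if n = ℓ². If n ≠ p² and q > 5, then the number #D_n(F_q) of decomposable monic original polynomials of degree n over F_q satisfies #D_n(F_q) ≥ (3 − 2q^{−1})·α_n/4 ≥ q^{2√n − 2}/2, where the exponent 2√n − 2 is taken as a real number. -/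
open Polynomial

namespace DU
open IntermediateField

variable {K : Type*} [Field K]

noncomputable abbrev toR (f : K[X]) : RatFunc K := algebraMap K[X] (RatFunc K) f

lemma exists_sub_C_intDegree (r : RatFunc K) (hr : ¬ ∃ c, r = RatFunc.C c)
    (hd : r.intDegree ≤ 0) : ∃ c, (r - RatFunc.C c).intDegree < 0 := by
  classical
  set u := r.num with hu
  set v := r.denom with hv
  have hv0 : v ≠ 0 := r.denom_ne_zero
  have hdeg : u.natDegree ≤ v.natDegree := by
    rw [RatFunc.intDegree, ← hu, ← hv] at hd; omega
  refine ⟨u.coeff v.natDegree / v.leadingCoeff, ?_⟩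
  set c := u.coeff v.natDegree / v.leadingCoeff with hc
  have e : r - RatFunc.C c = toR (u - C c * v) / toR v := by
    have h1 : r = toR u / toR v := (RatFunc.num_div_denom r).symm
    have h2 : toR v ≠ 0 := RatFunc.algebraMap_ne_zero hv0
    have h3 : toR (u - C c * v) = toR u - RatFunc.C c * toR v := by
      simp [toR, map_sub, map_mul]
    rw [h3, sub_div, mul_div_assoc, div_self h2, mul_one, ← h1]
  have hw : u - C c * v ≠ 0 := by
    intro h
    apply hr
    refine ⟨c, ?_⟩
    rw [h] at e
    simpa [sub_eq_zero] using e
  rw [e, RatFunc.intDegree_div (RatFunc.algebraMap_ne_zero hw) (RatFunc.algebraMap_ne_zero hv0),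
    RatFunc.intDegree_polynomial, RatFunc.intDegree_polynomial]
  have hcoef : (u - C c * v).coeff v.natDegree = 0 := by
    simp only [coeff_sub, coeff_C_mul, coeff_natDegree, hc]
    rw [div_mul_cancel₀ _ (leadingCoeff_ne_zero.2 hv0), sub_self]
  have hle : (u - C c * v).natDegree ≤ v.natDegree := by
    refine (natDegree_sub_le _ _).trans (max_le hdeg (natDegree_C_mul_le _ _))
  have hne : (u - C c * v).natDegree ≠ v.natDegree := by
    intro h
    rw [← h, coeff_natDegree, leadingCoeff_eq_zero] at hcoef
    exact hw hcoef
  omega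

lemma luroth_pos (E : IntermediateField K (RatFunc K)) (hE : E ≠ ⊥) :
    ∃ r : RatFunc K, E = K⟮r⟯ ∧ 0 < r.intDegree := by
  set r := RatFunc.Luroth.generator E
  have hr : ¬ ∃ c, r = RatFunc.C c := RatFunc.Luroth.generator_ne_C hE
  have hEr : E = K⟮r⟯ := RatFunc.Luroth.eq_adjoin_generator
  by_cases hd : 0 < r.intDegree
  · exact ⟨r, hEr, hd⟩
  obtain ⟨c, hc⟩ := exists_sub_C_intDegree r hr (not_lt.1 hd)
  refine ⟨(r - RatFunc.C c)⁻¹, ?_, by rw [RatFunc.intDegree_inv]; omega⟩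
  have hCm : ∀ L : IntermediateField K (RatFunc K), RatFunc.C c ∈ L := by
    intro L
    rw [← RatFunc.algebraMap_eq_C]; exact L.algebraMap_mem c
  rw [hEr]
  apply le_antisymm
  · rw [adjoin_simple_le_iff]
    have h1 := inv_mem (mem_adjoin_simple_self K (r - RatFunc.C c)⁻¹)
    rw [inv_inv] at h1
    have := add_mem h1 (hCm K⟮(r - RatFunc.C c)⁻¹⟯)
    simpa using this
  · rw [adjoin_simple_le_iff]
    exact inv_mem (sub_mem (mem_adjoin_simple_self K r) (hCm _))

lemma not_C_of_pos {r : RatFunc K} (h : 0 < r.intDegree) : ¬ ∃ c, r = RatFunc.C c := by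
  rintro ⟨c, rfl⟩
  simp at h

lemma mem_form {r h : RatFunc K} (hr : 0 < r.intDegree) (hm : h ∈ K⟮r⟯) :
    ∃ P Q : K[X], IsCoprime P Q ∧ aeval r Q ≠ 0 ∧ h * aeval r Q = aeval r P := by
  have ht := RatFunc.transcendental_of_ne_C r (not_C_of_pos hr)
  obtain ⟨u, hu⟩ := (RatFunc.algEquivOfTranscendental r ht).surjective ⟨h, hm⟩
  have h1 := RatFunc.algEquivOfTranscendental_apply r ht u
  rw [hu] at h1
  have h2 : aeval r u.denom ≠ 0 := by
    intro h0
    exact u.denom_ne_zero ((transcendental_iff.1 ht) _ h0)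
  refine ⟨u.num, u.denom, u.isCoprime_num_denom, h2, ?_⟩
  simp only at h1
  rw [h1, div_mul_cancel₀ _ h2]

lemma aeval_intDegree {r : RatFunc K} (hr : 0 < r.intDegree) {P : K[X]} (hP : P ≠ 0) :
    (aeval r P).intDegree = P.natDegree * r.intDegree := by
  classical
  have ht := RatFunc.transcendental_of_ne_C r (not_C_of_pos hr)
  have hr0 : r ≠ 0 := by rintro rfl; simp at hr
  have hP0 : aeval r P ≠ 0 := fun h0 => hP ((transcendental_iff.1 ht) _ h0)
  have h1 : (1 : WithZero (Multiplicative ℤ)) < RatFunc.inftyValuation K r := by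
    rw [RatFunc.inftyValuation_apply, RatFunc.inftyValuation_of_nonzero _ hr0]
    rw [← WithZero.exp_zero, WithZero.exp_lt_exp]; exact hr
  have := Polynomial.valuation_aeval_eq_valuation_X_pow_natDegree_of_one_lt_valuation_X
    (v := RatFunc.inftyValuation K) r h1 hP
  rw [RatFunc.inftyValuation_apply, RatFunc.inftyValuation_apply,
    RatFunc.inftyValuation_of_nonzero _ hr0, RatFunc.inftyValuation_of_nonzero _ hP0, ← WithZero.exp_nsmul] at this
  simpa using this

lemma luroth_poly0 (E : IntermediateField K (RatFunc K)) (h : K[X]) (hd : 0 < h.natDegree)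
    (hm : toR h ∈ E) : ∃ y : K[X], 0 < y.natDegree ∧ E = K⟮toR y⟯ := by
  have hE : E ≠ ⊥ := by
    rintro rfl
    rw [IntermediateField.mem_bot] at hm
    obtain ⟨c, hc⟩ := hm
    have := congrArg RatFunc.intDegree hc
    rw [RatFunc.intDegree_polynomial, RatFunc.algebraMap_eq_C, RatFunc.intDegree_C] at this
    omega
  obtain ⟨r, hEr, hr⟩ := luroth_pos E hE
  have hm' : toR h ∈ K⟮r⟯ := hEr ▸ hm
  obtain ⟨P, Q, hcop, hQ0, hPQ⟩ := mem_form hr hm'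
  have hh0 : toR h ≠ 0 := RatFunc.algebraMap_ne_zero (by rintro rfl; simp at hd)
  have hQ : Q ≠ 0 := by rintro rfl; simp at hQ0
  have hP : P ≠ 0 := by
    rintro rfl
    rw [map_zero, mul_eq_zero] at hPQ
    exact hPQ.elim hh0 hQ0
  have hlt : Q.natDegree < P.natDegree := by
    have := congrArg RatFunc.intDegree hPQ
    rw [RatFunc.intDegree_mul hh0 hQ0, aeval_intDegree hr hQ, aeval_intDegree hr hP,
      RatFunc.intDegree_polynomial] at this
    have h3 : (Q.natDegree : ℤ) * r.intDegree < P.natDegree * r.intDegree := by omega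
    exact_mod_cast lt_of_mul_lt_mul_right h3 hr.le
  have hIntegral : IsIntegral K[X] r := by
    refine ⟨C (C (P.leadingCoeff⁻¹)) * (P.map C - C h * Q.map C), ?_, ?_⟩
    · have hdP : (P.map (C : K →+* K[X])).natDegree = P.natDegree := natDegree_map _
      have hl : (C h * Q.map (C : K →+* K[X])).degree < (P.map (C : K →+* K[X])).degree := by
        apply degree_lt_degree
        refine lt_of_le_of_lt (natDegree_C_mul_le _ _) ?_
        rw [natDegree_map, natDegree_map]; exact hlt
      have : (P.map C - C h * Q.map C).leadingCoeff = C P.leadingCoeff := by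
        rw [leadingCoeff_sub_of_degree_lt hl, leadingCoeff_map]
      rw [Monic, leadingCoeff_mul, this, leadingCoeff_C, ← C_mul,
        inv_mul_cancel₀ (leadingCoeff_ne_zero.2 hP), C_1]
    · have hcomp : (algebraMap K[X] (RatFunc K)).comp C = algebraMap K (RatFunc K) := rfl
      rw [eval₂_mul, eval₂_sub, eval₂_mul, eval₂_map, eval₂_map, eval₂_C, eval₂_C]
      have h1 : eval₂ ((algebraMap K[X] (RatFunc K)).comp C) r P = aeval r P := by
        rw [aeval_def]; rfl
      have h2 : eval₂ ((algebraMap K[X] (RatFunc K)).comp C) r Q = aeval r Q := by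
        rw [aeval_def]; rfl
      rw [h1, h2, hPQ, sub_self, mul_zero]
  obtain ⟨y, hy⟩ := IsIntegrallyClosed.algebraMap_eq_of_integral hIntegral
  refine ⟨y, ?_, by rw [hEr, ← hy]⟩
  rw [← hy, RatFunc.intDegree_polynomial] at hr
  exact_mod_cast hr

lemma poly_mem_adjoin {y f : K[X]} (hy : 0 < y.natDegree) (hf : toR f ∈ K⟮toR y⟯) :
    ∃ A : K[X], f = A.comp y := by
  have hr : 0 < (toR y).intDegree := by rw [RatFunc.intDegree_polynomial]; exact_mod_cast hy
  obtain ⟨P, Q, hcop, hQ0, hPQ⟩ := mem_form hr hf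
  have ha : ∀ P : K[X], aeval (toR y) P = toR (P.comp y) := by
    intro P
    rw [aeval_algebraMap_apply, comp_eq_aeval]
  rw [ha, ha, ← map_mul] at hPQ
  have hPQ' := RatFunc.algebraMap_injective K hPQ
  have hcop' : IsCoprime (P.comp y) (Q.comp y) := by
    obtain ⟨a, b, hab⟩ := hcop
    refine ⟨a.comp y, b.comp y, ?_⟩
    rw [← mul_comp, ← mul_comp, ← add_comp, hab, one_comp]
  have hu : IsUnit (Q.comp y) := by
    apply hcop'.symm.isUnit_of_dvd' dvd_rfl
    exact ⟨f, by rw [← hPQ', mul_comm]⟩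
  have hQd : Q.natDegree = 0 := by
    have := natDegree_eq_zero_of_isUnit hu
    rw [natDegree_comp, mul_eq_zero] at this
    omega
  rw [eq_C_of_natDegree_eq_zero hQd] at hPQ' hu
  rw [C_comp] at hPQ' hu
  have hc : Q.coeff 0 ≠ 0 := by
    intro h0; rw [h0] at hu; simp at hu
  refine ⟨C (Q.coeff 0)⁻¹ * P, ?_⟩
  rw [mul_comp, C_comp, ← hPQ', mul_comm f, ← mul_assoc, ← C_mul, inv_mul_cancel₀ hc, C_1, one_mul]

/-- Polynomial version of the Lüroth theorem. -/
lemma luroth_poly (E : IntermediateField K (RatFunc K)) (h : K[X]) (hd : 0 < h.natDegree)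
    (hm : toR h ∈ E) : ∃ y : K[X], y.Monic ∧ y.eval 0 = 0 ∧ 0 < y.natDegree ∧ E = K⟮toR y⟯ := by
  obtain ⟨y, hy, hEy⟩ := luroth_poly0 E h hd hm
  have hy0 : y ≠ 0 := by rintro rfl; simp at hy
  have hl : y.leadingCoeff ≠ 0 := leadingCoeff_ne_zero.2 hy0
  have hdz : (y - C (y.eval 0)).natDegree = y.natDegree := natDegree_sub_C
  have hlz : (y - C (y.eval 0)).leadingCoeff = y.leadingCoeff := by
    apply leadingCoeff_sub_of_degree_lt
    exact lt_of_le_of_lt degree_C_le (natDegree_pos_iff_degree_pos.1 hy)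
  refine ⟨C y.leadingCoeff⁻¹ * (y - C (y.eval 0)), ?_, by simp, ?_, ?_⟩
  · rw [Monic, leadingCoeff_mul, leadingCoeff_C, hlz, inv_mul_cancel₀ hl]
  · rw [natDegree_C_mul (inv_ne_zero hl), hdz]; exact hy
  · rw [hEy]
    have hCm : ∀ (c : K) (L : IntermediateField K (RatFunc K)), toR (C c) ∈ L := by
      intro c L
      exact L.algebraMap_mem c
    apply le_antisymm
    · rw [adjoin_simple_le_iff]
      have h1 := mem_adjoin_simple_self K (toR (C y.leadingCoeff⁻¹ * (y - C (y.eval 0))))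
      have h2 := add_mem (mul_mem (hCm y.leadingCoeff _) h1) (hCm (y.eval 0) _)
      rw [← map_mul, ← map_add, ← mul_assoc, ← C_mul, mul_inv_cancel₀ hl, C_1, one_mul,
        sub_add_cancel] at h2
      exact h2
    · rw [adjoin_simple_le_iff]
      simp only [toR, map_mul, map_sub]
      exact mul_mem (hCm _ _) (sub_mem (mem_adjoin_simple_self K _) (hCm _ _))


lemma comp_mem (g h : K[X]) : toR (g.comp h) ∈ K⟮toR h⟯ := by
  have : toR (g.comp h) = aeval (toR h) g := by rw [aeval_algebraMap_apply, comp_eq_aeval]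
  rw [this]
  exact (mem_adjoin_simple_iff K _).2 ⟨g, 1, by simp⟩

/-- A nonconstant polynomial lying in the fields generated by `h₁` and `h₂`
lies in a polynomial ring generated by `y = B₁ ∘ h₁ = B₂ ∘ h₂`. -/
lemma inter_gen {h₁ h₂ : K[X]} (hd₁ : 0 < h₁.natDegree) (hd₂ : 0 < h₂.natDegree)
    {f₀ g₁ g₂ : K[X]} (hf₀ : 0 < f₀.natDegree) (e₁ : f₀ = g₁.comp h₁) (e₂ : f₀ = g₂.comp h₂) :
    ∃ y : K[X], y.Monic ∧ y.eval 0 = 0 ∧ 0 < y.natDegree ∧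
      (∃ B : K[X], y = B.comp h₁) ∧ (∃ B : K[X], y = B.comp h₂) ∧
      ∀ g g' : K[X], g.comp h₁ = g'.comp h₂ → ∃ G : K[X], g.comp h₁ = G.comp y := by
  have hmem : ∀ g h : K[X], toR (g.comp h) ∈ K⟮toR h⟯ := comp_mem
  obtain ⟨y, hm, h0, hd, hy⟩ := luroth_poly (K⟮toR h₁⟯ ⊓ K⟮toR h₂⟯) f₀ hf₀
    ⟨e₁ ▸ hmem _ _, e₂ ▸ hmem _ _⟩
  have hyy : toR y ∈ K⟮toR h₁⟯ ⊓ K⟮toR h₂⟯ := hy ▸ mem_adjoin_simple_self K _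
  refine ⟨y, hm, h0, hd, poly_mem_adjoin hd₁ hyy.1, poly_mem_adjoin hd₂ hyy.2, ?_⟩
  intro g g' hg
  apply poly_mem_adjoin hd
  rw [← hy]
  exact ⟨hmem _ _, hg ▸ hmem _ _⟩

/-- Two inner components of a common composition share a common right factor. -/
lemma sup_gen {g g' h h' : K[X]} (hd : 0 < h.natDegree) (hg' : 0 < g'.natDegree)
    (e : g.comp h = g'.comp h') :
    ∃ y A A' : K[X], y.Monic ∧ y.eval 0 = 0 ∧ 0 < y.natDegree ∧ h = A.comp y ∧ h' = A'.comp y ∧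
      A.natDegree ≤ g'.natDegree := by
  let L := K⟮toR h⟯
  let E' : IntermediateField L (RatFunc K) := L⟮toR h'⟯
  let E : IntermediateField K (RatFunc K) := E'.restrictScalars K
  have hhE : toR h ∈ E := by
    have : (⟨toR h, mem_adjoin_simple_self K _⟩ : L) ∈ (⊤ : Set L) := trivial
    exact E'.algebraMap_mem (⟨toR h, mem_adjoin_simple_self K _⟩ : L)
  have hh'E : toR h' ∈ E := mem_adjoin_simple_self L _
  obtain ⟨y, hm, h0, hyd, hy⟩ := luroth_poly E h hd hhE
  obtain ⟨A, hA⟩ := poly_mem_adjoin hyd (hy ▸ hhE)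
  obtain ⟨A', hA'⟩ := poly_mem_adjoin hyd (hy ▸ hh'E)
  refine ⟨y, A, A', hm, h0, hyd, hA, hA', ?_⟩
  have hfr : ∀ f : K[X], Module.finrank K⟮toR f⟯ (RatFunc K) = f.natDegree := by
    intro f
    rw [RatFunc.finrank_eq_max_natDegree]
    simp
  have h1 : Module.finrank E (RatFunc K) = y.natDegree := by
    rw [hy]; exact hfr y
  have h2 : Module.finrank L (RatFunc K) = h.natDegree := hfr h
  have h3 : Module.finrank L E' * Module.finrank E' (RatFunc K) = Module.finrank L (RatFunc K) :=
    Module.finrank_mul_finrank L E' (RatFunc K)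
  have h1' : Module.finrank E' (RatFunc K) = y.natDegree := h1
  have hfL : toR (g.comp h) ∈ L := comp_mem _ _
  let p : L[X] := g'.map (algebraMap K L) - C ⟨toR (g.comp h), hfL⟩
  have hp : p.natDegree = g'.natDegree := by
    simp only [p]
    rw [natDegree_sub_C, natDegree_map]
  have hp0 : p ≠ 0 := by
    intro h0; rw [h0] at hp; simp at hp; omega
  have hpe : aeval (toR h') p = 0 := by
    simp only [p, map_sub, aeval_map_algebraMap, aeval_C]
    have : aeval (toR h') g' = toR (g'.comp h') := by
      rw [toR, aeval_algebraMap_apply, comp_eq_aeval]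
    rw [this, ← e]
    exact sub_self _
  have hIntegral : IsIntegral L (toR h') := by
    rw [← isAlgebraic_iff_isIntegral]
    exact ⟨p, hp0, hpe⟩
  have h4 : Module.finrank L E' ≤ g'.natDegree := by
    rw [show Module.finrank L E' = _ from adjoin.finrank hIntegral, ← hp]
    exact natDegree_le_of_dvd (minpoly.dvd _ _ hpe) hp0
  rw [h1', h2, hA, natDegree_comp] at h3
  have := Nat.eq_of_mul_eq_mul_right hyd h3
  omega

end DU

namespace DU

/-- monic original polynomials of degree `e`. -/
def P (K : Type*) [Field K] (e : ℕ) : Set K[X] := {f | f.Monic ∧ f.natDegree = e ∧ f.eval 0 = 0}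

variable {K : Type*} [Field K]

lemma P_ext {e : ℕ} {f g : K[X]} (hf : f ∈ P K e) (hg : g ∈ P K e)
    (h : ∀ i, 1 ≤ i → i < e → f.coeff i = g.coeff i) : f = g := by
  ext i
  rcases Nat.eq_zero_or_pos i with rfl | hi
  · rw [coeff_zero_eq_eval_zero, coeff_zero_eq_eval_zero, hf.2.2, hg.2.2]
  rcases lt_trichotomy i e with h1 | rfl | h1
  · exact h i hi h1
  · have h1 := hf.1.coeff_natDegree
    have h2 := hg.1.coeff_natDegree
    rw [hf.2.1] at h1
    rw [hg.2.1] at h2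
    rw [h1, h2]
  · rw [coeff_eq_zero_of_natDegree_lt (by rw [hf.2.1]; exact h1),
      coeff_eq_zero_of_natDegree_lt (by rw [hg.2.1]; exact h1)]

noncomputable def mk (e : ℕ) (c : Fin (e - 1) → K) : K[X] :=
  X ^ e + ∑ i : Fin (e - 1), C (c i) * X ^ (i.1 + 1)

lemma mk_low (e : ℕ) (he : 1 ≤ e) (c : Fin (e - 1) → K) :
    (∑ i : Fin (e - 1), C (c i) * X ^ (i.1 + 1)).degree < (e : WithBot ℕ) := by
  refine lt_of_le_of_lt (degree_sum_le _ _) ?_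
  rw [Finset.sup_lt_iff (by exact WithBot.bot_lt_coe e)]
  intro i _
  refine lt_of_le_of_lt (degree_C_mul_X_pow_le _ _) ?_
  have := i.2
  exact_mod_cast (by omega : i.1 + 1 < e)

lemma mk_mem (e : ℕ) (he : 1 ≤ e) (c : Fin (e - 1) → K) : mk e c ∈ P K e := by
  refine ⟨monic_X_pow_add (mk_low e he c), natDegree_eq_of_degree_eq_some ?_, ?_⟩
  · rw [mk, degree_add_eq_left_of_degree_lt]
    · exact degree_X_pow e
    · rw [degree_X_pow]; exact mk_low e he c
  · simp only [mk, eval_add, eval_pow, eval_X, eval_finsetSum, eval_mul, eval_C]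
    rw [zero_pow (by omega), zero_add]
    apply Finset.sum_eq_zero
    intro i _
    simp

lemma mk_coeff (e : ℕ) (c : Fin (e - 1) → K) (i : Fin (e - 1)) :
    (mk e c).coeff (i.1 + 1) = c i := by
  have := i.2
  rw [mk, coeff_add, coeff_X_pow, if_neg (by omega), zero_add, finsetSum_coeff,
    Finset.sum_eq_single i]
  · simp
  · intro j _ hj
    rw [coeff_C_mul, coeff_X_pow, if_neg, mul_zero]
    intro h
    apply hj
    ext; omega
  · simp

lemma P_eq_range (e : ℕ) (he : 1 ≤ e) : P K e = Set.range (mk (K := K) e) := by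
  ext f
  constructor
  · intro hf
    refine ⟨fun i => f.coeff (i.1 + 1), ?_⟩
    apply P_ext (mk_mem e he _) hf
    intro i h1 h2
    have := mk_coeff e (fun i => f.coeff (i.1 + 1)) ⟨i - 1, by omega⟩
    simp only at this
    rwa [Nat.sub_add_cancel h1] at this
  · rintro ⟨c, rfl⟩
    exact mk_mem e he c

lemma mk_inj (e : ℕ) : Function.Injective (mk (K := K) e) := by
  intro c c' h
  ext i
  rw [← mk_coeff e c i, h, mk_coeff]

lemma P_finite [Fintype K] (e : ℕ) (he : 1 ≤ e) : (P K e).Finite := by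
  rw [P_eq_range e he]; exact Set.finite_range _

lemma P_ncard [Fintype K] (e : ℕ) (he : 1 ≤ e) : (P K e).ncard = Fintype.card K ^ (e - 1) := by
  rw [P_eq_range e he, ← Set.image_univ, Set.ncard_image_of_injective _ (mk_inj e), Set.ncard_univ]
  simp

/-- polynomials in `P e` with vanishing second coefficient -/
def P0 (K : Type*) [Field K] (e : ℕ) : Set K[X] := {f | f ∈ P K e ∧ f.coeff (e - 1) = 0}

lemma P0_ncard [Fintype K] (e : ℕ) (he : 2 ≤ e) : (P0 K e).ncard ≤ Fintype.card K ^ (e - 2) := by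
  have h : (Set.univ : Set (Fin (e - 2) → K)).ncard = Fintype.card K ^ (e - 2) := by
    rw [Set.ncard_univ]; simp
  rw [← h]
  refine Set.ncard_le_ncard_of_injOn (fun f i => f.coeff (i.1 + 1)) (fun _ _ => Set.mem_univ _) ?_
    Set.finite_univ
  intro f hf g hg hfg
  apply P_ext hf.1 hg.1
  intro i h1 h2
  rcases Nat.lt_or_ge i (e - 1) with h3 | h3
  · have := congrFun hfg ⟨i - 1, by omega⟩
    simp only at this
    rwa [Nat.sub_add_cancel h1] at this
  · obtain rfl : i = e - 1 := by omega
    rw [hf.2, hg.2]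

lemma comp_P {a b : ℕ} (hb : 1 ≤ b) {g h : K[X]} (hg : g ∈ P K a) (hh : h ∈ P K b) :
    g.comp h ∈ P K (a * b) := by
  refine ⟨hg.1.comp hh.1 (by rw [hh.2.1]; omega), ?_, ?_⟩
  · rw [natDegree_comp, hg.2.1, hh.2.1]
  · rw [eval_comp, hh.2.2, hg.2.2]

lemma factor_P {n b : ℕ} (hb : 1 ≤ b) {f A y : K[X]} (hf : f ∈ P K n) (hy : y ∈ P K b)
    (e : f = A.comp y) : A ∈ P K A.natDegree ∧ A.natDegree * b = n := by
  refine ⟨⟨?_, rfl, ?_⟩, ?_⟩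
  · have h1 := hf.1
    rw [e, Monic, leadingCoeff_comp (by rw [hy.2.1]; omega), hy.1.leadingCoeff, one_pow, mul_one] at h1
    exact h1
  · have h1 := hf.2.2
    rwa [e, eval_comp, hy.2.2] at h1
  · have h1 := hf.2.1
    rwa [e, natDegree_comp, hy.2.1] at h1

lemma P_one {A : K[X]} (hA : A ∈ P K 1) : A = X := by
  apply P_ext hA
  · exact ⟨monic_X, natDegree_X, eval_X⟩
  · intro i h1 h2; omega

lemma comp_cancel {g g' h : K[X]} (hd : 0 < h.natDegree) (e : g.comp h = g'.comp h) : g = g' := by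
  have h1 : (g - g').comp h = 0 := by rw [sub_comp, e, sub_self]
  rw [comp_eq_zero_iff] at h1
  rcases h1 with h1 | ⟨_, h1⟩
  · exact sub_eq_zero.1 h1
  · rw [h1, natDegree_C] at hd; omega

lemma count_bad {α β : Type*} (φ : α → β) (S B : Set α) (hS : S.Finite)
    (hB : B ⊆ S) (hinj : Set.InjOn φ (S \ B)) : S.ncard ≤ (φ '' S).ncard + B.ncard := by
  have h1 : (S \ B).ncard + B.ncard = S.ncard := Set.ncard_sdiff_add_ncard_of_subset hB hS
  have h2 : (φ '' (S \ B)).ncard = (S \ B).ncard := hinj.ncard_image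
  have h3 : (φ '' (S \ B)).ncard ≤ (φ '' S).ncard :=
    Set.ncard_le_ncard (Set.image_mono Set.sdiff_subset) (hS.image _)
  omega

lemma biUnion_bound {α ι : Type*} (I : Set ι) (hI : I.Finite) (S : ι → Set α) (m : ℕ)
    (h : ∀ i ∈ I, (S i).Finite ∧ (S i).ncard ≤ m) : (⋃ i ∈ I, S i).ncard ≤ I.ncard * m := by
  induction I, hI using Set.Finite.induction_on with
  | empty => simp
  | @insert a s ha hs ih =>
    rw [Set.biUnion_insert, Set.ncard_insert_of_notMem ha hs]
    refine (Set.ncard_union_le _ _).trans ?_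
    have h1 := ih (fun i hi => h i (Set.mem_insert_of_mem _ hi))
    have h2 := (h a (Set.mem_insert _ _)).2
    linarith

lemma arith1 {l d : ℕ} (hl : 2 ≤ l) (hd : l < d) : l + d / l ≤ d := by
  have h1 := Nat.div_add_mod d l
  have h2 : 1 ≤ d / l := Nat.div_pos hd.le (by omega)
  generalize d / l = k at *
  generalize d % l = r at *
  rcases Nat.lt_or_ge k 2 with h3 | h3
  · omega
  · obtain ⟨a, rfl⟩ := Nat.exists_eq_add_of_le hl
    obtain ⟨b, rfl⟩ := Nat.exists_eq_add_of_le h3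
    nlinarith [Nat.zero_le (a*b)]

end DU

namespace DU
variable {K : Type*} [Field K]

/-- compositions of `P a` and `P b` -/
def Dc (K : Type*) [Field K] (a b : ℕ) : Set K[X] :=
  (fun x : K[X] × K[X] => x.1.comp x.2) '' (P K a ×ˢ P K b)

lemma Dc_finite [Fintype K] {a b : ℕ} (ha : 1 ≤ a) (hb : 1 ≤ b) : (Dc K a b).Finite :=
  ((P_finite a ha).prod (P_finite b hb)).image _

lemma prod_card [Fintype K] {a b : ℕ} (ha : 1 ≤ a) (hb : 1 ≤ b) :
    (P K a ×ˢ P K b).ncard = Fintype.card K ^ (a + b - 2) := by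
  rw [Set.ncard_prod, P_ncard a ha, P_ncard b hb, ← pow_add]
  congr 1; omega

lemma D1_bound [Fintype K] {l d : ℕ} (hl : 2 ≤ l) (hd : l < d)
    (hmin : ∀ k, 2 ≤ k → k ∣ d → l ≤ k) :
    Fintype.card K ^ (l + d - 2) ≤ (Dc K l d).ncard + Fintype.card K ^ (l + d - 3) := by
  have hq : 1 ≤ Fintype.card K := Fintype.card_pos
  have hdl : 1 ≤ d / l := Nat.div_pos hd.le (by omega)
  let Bad : Set K[X] := P K d ∩ Dc K l (d / l)
  have hBad : Bad.ncard ≤ Fintype.card K ^ (d - 2) := by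
    have h1 : Bad.ncard ≤ (Dc K l (d / l)).ncard :=
      Set.ncard_le_ncard Set.inter_subset_right (Dc_finite (by omega) hdl)
    have h2 : (Dc K l (d / l)).ncard ≤ (P K l ×ˢ P K (d / l)).ncard :=
      Set.ncard_image_le ((P_finite l (by omega)).prod (P_finite _ hdl))
    rw [prod_card (by omega) hdl] at h2
    refine h1.trans (h2.trans (Nat.pow_le_pow_right hq ?_))
    have := arith1 hl hd
    omega
  have h := count_bad (fun x : K[X] × K[X] => x.1.comp x.2) (P K l ×ˢ P K d) (P K l ×ˢ Bad)
    ((P_finite l (by omega)).prod (P_finite d (by omega)))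
    (Set.prod_mono le_rfl Set.inter_subset_left) ?_
  · rw [prod_card (by omega) (by omega)] at h
    refine h.trans (Nat.add_le_add_left ?_ _)
    rw [Set.ncard_prod, P_ncard l (by omega)]
    calc _ ≤ Fintype.card K ^ (l - 1) * Fintype.card K ^ (d - 2) := Nat.mul_le_mul_left _ hBad
      _ = _ := by rw [← pow_add]; congr 1; omega
  · rintro ⟨g, h⟩ ⟨⟨hg, hh⟩, hb⟩ ⟨g', h'⟩ ⟨⟨hg', hh'⟩, hb'⟩ e
    simp only at hg hh hg' hh' e
    obtain ⟨y, A, A', hym, hy0, hyd, hA, hA', hdA⟩ := sup_gen (by rw [hh.2.1]; omega)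
      (by rw [hg'.2.1]; omega) e
    have hy : y ∈ P K y.natDegree := ⟨hym, rfl, hy0⟩
    obtain ⟨hAP, hAd⟩ := factor_P hyd hh hy hA
    obtain ⟨hAP', hAd'⟩ := factor_P hyd hh' hy hA'
    rw [hg'.2.1] at hdA
    have hAA : A'.natDegree = A.natDegree := Nat.eq_of_mul_eq_mul_right hyd (hAd'.trans hAd.symm)
    have hA0 : A.natDegree ≠ 0 := by
      intro h0; rw [h0] at hAd; omega
    rcases Nat.lt_or_ge A.natDegree 2 with h1 | h1
    · have h2 : A.natDegree = 1 := by omega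
      rw [h2] at hAP hAA
      rw [hAA] at hAP'
      rw [P_one hAP, X_comp] at hA
      rw [P_one hAP', X_comp] at hA'
      have hhh : h = h' := by rw [hA, hA']
      subst hhh
      have := comp_cancel (by rw [hh.2.1]; omega) e
      rw [this]
    · exfalso
      apply hb
      have h2 : A.natDegree = l := le_antisymm hdA (hmin _ h1 ⟨_, hAd.symm⟩)
      rw [h2] at hAd hAP
      refine ⟨hg, hh, ⟨A, y⟩, ⟨hAP, ?_⟩, hA.symm⟩
      have : d / l = y.natDegree := by
        rw [← hAd, Nat.mul_div_cancel_left _ (by omega)]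
      simp only
      rw [this]; exact hy

lemma D2_bound [Fintype K] {l d : ℕ} (hl : 2 ≤ l) (hd : l < d)
    (hmin : ∀ k, 2 ≤ k → k ∣ d → l ≤ k) :
    Fintype.card K ^ (l + d - 2) ≤ (Dc K d l).ncard + Fintype.card K ^ (l + d - 3) := by
  have hq : 1 ≤ Fintype.card K := Fintype.card_pos
  have hdl : 1 ≤ d / l := Nat.div_pos hd.le (by omega)
  let S : K[X] × K[X] → Set (K[X] × K[X]) := fun w =>
    {x | x ∈ P K d ×ˢ P K l ∧ x.2 = w.1 ∧ w.1 ≠ w.2 ∧ ∃ g' ∈ P K d, x.1.comp w.1 = g'.comp w.2}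
  let B : Set (K[X] × K[X]) := ⋃ w ∈ P K l ×ˢ P K l, S w
  have hfin := (P_finite (K := K) d (by omega)).prod (P_finite (K := K) l (by omega))
  have hSfin : ∀ w, (S w).Finite := fun w => hfin.subset (fun x hx => hx.1)
  have hScard : ∀ w ∈ P K l ×ˢ P K l, (S w).ncard ≤ Fintype.card K ^ (d / l - 1) := by
    rintro ⟨h, h'⟩ ⟨hh, hh'⟩
    simp only at hh hh'
    by_cases hne : (S (h, h')).Nonempty
    swap
    · rw [Set.not_nonempty_iff_eq_empty] at hne
      rw [hne]; simp
    obtain ⟨⟨g0, _⟩, ⟨hg0, -⟩, -, hneq, g0', hg0', e0⟩ := hne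
    simp only at hg0 hneq hg0' e0
    obtain ⟨y, hym, hy0, hyd, ⟨A, hA⟩, ⟨A', hA'⟩, hG⟩ := inter_gen (h₁ := h) (h₂ := h')
      (f₀ := g0.comp h) (g₁ := g0) (g₂ := g0')
      (by rw [hh.2.1]; omega) (by rw [hh'.2.1]; omega)
      (by rw [natDegree_comp, hg0.2.1, hh.2.1]; exact Nat.mul_pos (by omega) (by omega)) rfl e0
    have hy : y ∈ P K y.natDegree := ⟨hym, rfl, hy0⟩
    obtain ⟨hAP, hAd⟩ := factor_P (by omega) hy hh hA
    obtain ⟨hAP', hAd'⟩ := factor_P (by omega) hy hh' hA'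
    have hAA : A'.natDegree = A.natDegree :=
      Nat.eq_of_mul_eq_mul_right (by omega : 0 < l) (hAd'.trans hAd.symm)
    have hA0 : A.natDegree ≠ 0 := by
      intro h0; rw [h0] at hAd; omega
    have hA1 : A.natDegree ≠ 1 := by
      intro h2
      rw [h2] at hAP hAA
      rw [hAA] at hAP'
      rw [P_one hAP, X_comp] at hA
      rw [P_one hAP', X_comp] at hA'
      exact hneq (by rw [← hA, hA'])
    have key : ∀ g ∈ P K d, ∀ g' ∈ P K d, g.comp h = g'.comp h' →
        ∃ G ∈ P K (d / A.natDegree), g.comp h = G.comp y ∧ A.natDegree ∣ d := by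
      intro g hg g' hg' e
      obtain ⟨G, hGe⟩ := hG g g' e
      obtain ⟨hGP, hGd⟩ := factor_P hyd (comp_P (by omega) hg hh) hy hGe
      rw [← hAd, ← mul_assoc] at hGd
      have h3 := Nat.eq_of_mul_eq_mul_right (by omega : 0 < l) hGd
      have : d / A.natDegree = G.natDegree := by
        rw [← h3, Nat.mul_div_cancel _ (by omega)]
      exact ⟨G, this ▸ hGP, hGe, ⟨_, by rw [← h3, mul_comm]⟩⟩
    have hkd : A.natDegree ∣ d := by
      obtain ⟨_, _, _, h⟩ := key g0 hg0 g0' hg0' e0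
      exact h
    have hk : l ≤ A.natDegree := hmin _ (by omega) hkd
    have hdk : 1 ≤ d / A.natDegree := Nat.div_pos (Nat.le_of_dvd (by omega) hkd) (by omega)
    have hle : (S (h, h')).ncard ≤ ((fun G : K[X] => G.comp y) '' P K (d / A.natDegree)).ncard := by
      refine Set.ncard_le_ncard_of_injOn (fun x : K[X] × K[X] => x.1.comp h) ?_ ?_
        ((P_finite _ hdk).image _)
      · rintro ⟨g, _⟩ ⟨⟨hg, -⟩, -, -, g', hg', e⟩
        obtain ⟨G, hGP, hGe, -⟩ := key g hg g' hg' e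
        exact ⟨G, hGP, hGe.symm⟩
      · rintro ⟨g, u⟩ ⟨-, hu, -⟩ ⟨g', u'⟩ ⟨-, hu', -⟩ e
        simp only at e hu hu'
        rw [comp_cancel (by rw [hh.2.1]; omega) e, hu, hu']
    refine hle.trans ((Set.ncard_image_le (P_finite _ hdk)).trans ?_)
    rw [P_ncard _ hdk]
    apply Nat.pow_le_pow_right hq
    have := Nat.div_le_div_left hk (by omega : 0 < l) (a := d)
    omega
  have hB := biUnion_bound (P K l ×ˢ P K l)
    ((P_finite (K := K) l (by omega)).prod (P_finite (K := K) l (by omega))) S _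
    (fun w hw => ⟨hSfin w, hScard w hw⟩)
  have h := count_bad (fun x : K[X] × K[X] => x.1.comp x.2) (P K d ×ˢ P K l) B hfin
    (Set.iUnion₂_subset (fun w hw x hx => hx.1)) ?_
  · rw [prod_card (by omega) (by omega), add_comm d l] at h
    refine h.trans (Nat.add_le_add_left (hB.trans ?_) _)
    rw [prod_card (by omega) (by omega), ← pow_add]
    apply Nat.pow_le_pow_right hq
    have := arith1 hl hd
    omega
  · rintro ⟨g, h⟩ ⟨⟨hg, hh⟩, hb⟩ ⟨g', h'⟩ ⟨⟨hg', hh'⟩, hb'⟩ e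
    simp only at hg hh hg' hh' e
    by_cases hhh : h = h'
    · subst hhh
      have := comp_cancel (by rw [hh.2.1]; omega) e
      rw [this]
    · exfalso
      apply hb
      refine Set.mem_iUnion₂.2 ⟨(h, h'), ⟨hh, hh'⟩, ⟨hg, hh⟩, rfl, hhh, g', hg', e⟩

end DU

namespace DU
variable {K : Type*} [Field K]

lemma P_coeff_top {e : ℕ} {g : K[X]} (hg : g ∈ P K e) : g.coeff e = 1 := by
  have h1 := hg.1.coeff_natDegree
  rwa [hg.2.1] at h1

lemma low_deg {e : ℕ} (he : 1 ≤ e) {g : K[X]} (hg : g ∈ P K e) :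
    (g - X ^ e).natDegree ≤ e - 1 := by
  rw [natDegree_le_iff_coeff_eq_zero]
  intro N hN
  rw [coeff_sub, coeff_X_pow]
  rcases Nat.eq_or_lt_of_le (by omega : e ≤ N) with rfl | h
  · rw [P_coeff_top hg]; simp
  · rw [coeff_eq_zero_of_natDegree_lt (by rw [hg.2.1]; exact h), if_neg (by omega), sub_zero]

lemma low_deg2 {e : ℕ} (he : 2 ≤ e) {g : K[X]} (hg : g ∈ P K e) :
    (g - X ^ e - C (g.coeff (e - 1)) * X ^ (e - 1)).natDegree ≤ e - 2 := by
  rw [natDegree_le_iff_coeff_eq_zero]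
  intro N hN
  rw [coeff_sub, coeff_C_mul, coeff_X_pow]
  rcases Nat.eq_or_lt_of_le (by omega : e - 1 ≤ N) with rfl | h
  · rw [coeff_sub, coeff_X_pow]
    rw [if_neg (by omega)]; simp
  · rw [if_neg (by omega), mul_zero, sub_zero]
    exact coeff_eq_zero_of_natDegree_lt (lt_of_le_of_lt (low_deg (by omega) hg) h)

lemma comp_low {e d : ℕ} (he : 1 ≤ e) {g h : K[X]} (hg : g ∈ P K e) (hh : h ∈ P K d) :
    (g.comp h - h ^ e).natDegree ≤ (e - 1) * d := by
  have : g.comp h - h ^ e = (g - X ^ e).comp h := by simp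
  rw [this, natDegree_comp, hh.2.1]
  exact Nat.mul_le_mul_right _ (low_deg he hg)

lemma geom_deg {l d : ℕ} {h1 h2 : K[X]} (hh1 : h1 ∈ P K d)
    (hh2 : h2 ∈ P K d) :
    (∑ i ∈ Finset.range l, h1 ^ i * h2 ^ (l - 1 - i)).coeff ((l - 1) * d) = l := by
  rw [finsetSum_coeff]
  have : ∀ i ∈ Finset.range l, (h1 ^ i * h2 ^ (l - 1 - i)).coeff ((l - 1) * d) = 1 := by
    intro i hi
    rw [Finset.mem_range] at hi
    have hm : (h1 ^ i * h2 ^ (l - 1 - i)).Monic := (hh1.1.pow _).mul (hh2.1.pow _)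
    have hd : (h1 ^ i * h2 ^ (l - 1 - i)).natDegree = (l - 1) * d := by
      rw [(hh1.1.pow _).natDegree_mul (hh2.1.pow _), hh1.1.natDegree_pow, hh2.1.natDegree_pow,
        hh1.2.1, hh2.2.1, ← add_mul]
      congr 1; omega
    have := hm.coeff_natDegree
    rwa [hd] at this
  rw [Finset.sum_congr rfl this]
  simp

lemma tame_h {l d : ℕ} (hl : 1 ≤ l) (hlK : (l : K) ≠ 0) {g1 g2 h1 h2 : K[X]}
    (hg1 : g1 ∈ P K l) (hg2 : g2 ∈ P K l) (hh1 : h1 ∈ P K d) (hh2 : h2 ∈ P K d)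
    (hdeg : (g1.comp h1 - g2.comp h2).natDegree ≤ (l - 1) * d) : h1 = h2 := by
  by_contra hne
  have hD : h1 - h2 ≠ 0 := sub_ne_zero.2 hne
  set S := ∑ i ∈ Finset.range l, h1 ^ i * h2 ^ (l - 1 - i) with hS
  have hSc : S.coeff ((l - 1) * d) ≠ 0 := by rw [hS, geom_deg hh1 hh2]; exact hlK
  have hSd : (l - 1) * d ≤ S.natDegree := le_natDegree_of_ne_zero hSc
  have hS0 : S ≠ 0 := by rintro h; rw [h] at hSc; simp at hSc
  have hD1 : 1 ≤ (h1 - h2).natDegree := by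
    by_contra h0
    have h0' : (h1 - h2).natDegree = 0 := by omega
    have h3 := eq_C_of_natDegree_eq_zero h0'
    rw [coeff_zero_eq_eval_zero, eval_sub, hh1.2.2, hh2.2.2, sub_zero, C_0] at h3
    exact hD h3
  have e : (h1 - h2) * S = (g1.comp h1 - g2.comp h2) - (g1.comp h1 - h1 ^ l)
      + (g2.comp h2 - h2 ^ l) := by
    rw [hS, (Commute.all _ _).mul_geom_sum₂]; ring
  have h4 := congrArg natDegree e
  rw [natDegree_mul hD hS0] at h4
  have h5 : ((g1.comp h1 - g2.comp h2) - (g1.comp h1 - h1 ^ l)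
      + (g2.comp h2 - h2 ^ l)).natDegree ≤ (l - 1) * d :=
    (natDegree_add_le _ _).trans (max_le ((natDegree_sub_le _ _).trans
      (max_le hdeg (comp_low hl hg1 hh1))) (comp_low hl hg2 hh2))
  omega

lemma square_bound [Fintype K] {l : ℕ} (hl : 1 ≤ l) (hlK : (l : K) ≠ 0) :
    Fintype.card K ^ (l + l - 2) = (Dc K l l).ncard := by
  rw [← prod_card hl hl]
  refine (Set.InjOn.ncard_image ?_).symm
  rintro ⟨g, h⟩ ⟨hg, hh⟩ ⟨g', h'⟩ ⟨hg', hh'⟩ e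
  simp only at hg hh hg' hh' e
  have hhh : h = h' := tame_h hl hlK hg hg' hh hh' (by rw [e, sub_self]; simp)
  subst hhh
  rw [comp_cancel (by rw [hh.2.1]; omega) e]

lemma tame_inter [Fintype K] {l d : ℕ} (hl : 2 ≤ l) (hd : l < d) (hlK : (l : K) ≠ 0) :
    (Dc K l d ∩ Dc K d l).ncard ≤ Fintype.card K ^ (l + d - 3) := by
  have hq : 1 ≤ Fintype.card K := Fintype.card_pos
  have : ∀ f ∈ Dc K l d ∩ Dc K d l, ∃ g h gt ht : K[X], g ∈ P K l ∧ h ∈ P K d ∧ gt ∈ P K d ∧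
      ht ∈ P K l ∧ f = g.comp h ∧ f = gt.comp ht := by
    rintro f ⟨⟨⟨g, h⟩, ⟨hg, hh⟩, e⟩, ⟨⟨gt, ht⟩, ⟨hgt, hht⟩, et⟩⟩
    exact ⟨g, h, gt, ht, hg, hh, hgt, hht, e.symm, et.symm⟩
  choose! g h gt ht H using this
  have hT : (P K l ×ˢ (Set.univ : Set ((Fin (d / l) → K) × (Fin (l - 2) → K)))).ncard
      = Fintype.card K ^ (l - 1 + (d / l + (l - 2))) := by
    rw [Set.ncard_prod, P_ncard l (by omega), Set.ncard_univ]
    simp [pow_add]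
  have hle : l - 1 + (d / l + (l - 2)) ≤ l + d - 3 := by
    have := arith1 hl hd
    omega
  refine le_trans ?_ (Nat.pow_le_pow_right hq hle)
  rw [← hT]
  refine Set.ncard_le_ncard_of_injOn (fun f => (ht f, (fun i => (gt f).coeff (d - 1 - i.1)),
    (fun i => (g f).coeff (i.1 + 1)))) ?_ ?_
    ((P_finite l (by omega)).prod Set.finite_univ)
  · intro f hf
    exact ⟨(H f hf).2.2.2.1, trivial⟩
  · intro f hf f' hf' e
    simp only [Prod.mk.injEq] at e
    obtain ⟨e1, e2, e3⟩ := e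
    obtain ⟨hg, hh, hgt, hht, ef, eft⟩ := H f hf
    obtain ⟨hg', hh', hgt', hht', ef', eft'⟩ := H f' hf'
    have hmod := Nat.lt_mul_div_succ d (by omega : 0 < l)
    have hdl : d / l ≤ d := Nat.div_le_self _ _
    have hdl' : d / l + l ≤ d := by have := arith1 hl hd; omega
    have hgd : (gt f - gt f').natDegree ≤ d - d / l - 1 := by
      rw [natDegree_le_iff_coeff_eq_zero]
      intro N hN
      rw [coeff_sub, sub_eq_zero]
      rcases lt_trichotomy N d with h1 | rfl | h1
      · have := congrFun e2 ⟨d - 1 - N, by omega⟩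
        simp only at this
        rwa [show d - 1 - (d - 1 - N) = N by omega] at this
      · rw [P_coeff_top hgt, P_coeff_top hgt']
      · rw [coeff_eq_zero_of_natDegree_lt (by rw [hgt.2.1]; exact h1),
          coeff_eq_zero_of_natDegree_lt (by rw [hgt'.2.1]; exact h1)]
    have hff : (f - f').natDegree < (l - 1) * d := by
      rw [eft, eft', ← e1, ← sub_comp, natDegree_comp, hht.2.1]
      refine lt_of_le_of_lt (Nat.mul_le_mul_right _ hgd) ?_
      have h6 : (d - d / l - 1) = d - (d / l + 1) := by omega
      rw [h6, Nat.sub_mul, Nat.sub_mul, one_mul, mul_comm l d]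
      have : d ≤ d * l := Nat.le_mul_of_pos_right _ (by omega)
      have h7 : (d / l + 1) * l ≤ d * l := Nat.mul_le_mul_right _ (by omega)
      have h8 : d < (d / l + 1) * l := by rw [mul_comm]; exact hmod
      omega
    have hhh : h f = h f' := tame_h (by omega) hlK hg hg' hh hh' (by rw [← ef, ← ef']; exact hff.le)
    have hgg : g f = g f' := by
      apply P_ext hg hg'
      intro i h1 h2
      rcases Nat.lt_or_ge i (l - 1) with h3 | h3
      · have := congrFun e3 ⟨i - 1, by omega⟩
        simp only at this
        rwa [Nat.sub_add_cancel h1] at this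
      · obtain rfl : i = l - 1 := by omega
        by_contra hne
        have h9 : l - 1 ≤ (g f - g f').natDegree :=
          le_natDegree_of_ne_zero (by rw [coeff_sub]; exact sub_ne_zero.2 hne)
        rw [ef, ef', ← hhh, ← sub_comp, natDegree_comp, hh.2.1] at hff
        exact absurd (Nat.mul_le_mul_right d h9) (not_le.2 hff)
    rw [ef, ef', hgg, hhh]

lemma pow_char_coeff {p : ℕ} [Fact p.Prime] [CharP K p] (h : K[X]) {N : ℕ} (hN : ¬ p ∣ N) :
    (h ^ p).coeff N = 0 := by
  have hp : 0 < p := (Fact.out : p.Prime).pos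
  rw [← map_frobenius_expand, coeff_map, coeff_expand hp, if_neg hN, map_zero]

lemma nextCoeff_pow_P {p m : ℕ} (hp : 2 ≤ p) (hm : 1 ≤ m) {h : K[X]} (hh : h ∈ P K p) :
    (h ^ m).coeff (p * m - 1) = m * h.coeff (p - 1) := by
  have h1 := hh.1.nextCoeff_pow m
  have hd : (h ^ m).natDegree = p * m := by rw [hh.1.natDegree_pow, hh.2.1, mul_comm]
  have hpos : 0 < p * m := Nat.mul_pos (by omega) (by omega)
  rw [nextCoeff_of_natDegree_pos (by rw [hd]; exact hpos),
    nextCoeff_of_natDegree_pos (by rw [hh.2.1]; omega), hd, hh.2.1] at h1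
  rw [h1]; simp

lemma wild_inter [Fintype K] {p d : ℕ} [Fact p.Prime] [CharP K p] (hd : p < d) :
    (Dc K p d ∩ Dc K d p).ncard ≤ 2 * Fintype.card K ^ (p + d - 3) := by
  have hp : 2 ≤ p := (Fact.out : p.Prime).two_le
  let φ := fun x : K[X] × K[X] => x.1.comp x.2
  have hsub : Dc K p d ∩ Dc K d p ⊆ φ '' (P0 K d ×ˢ P K p) ∪ φ '' (P K d ×ˢ P0 K p) := by
    rintro f ⟨⟨⟨g, h⟩, ⟨hg, hh⟩, e⟩, ⟨⟨gt, ht⟩, ⟨hgt, hht⟩, et⟩⟩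
    simp only at hg hh e hgt hht et
    have hf : ∀ N, (p - 1) * d < N → ¬ p ∣ N → f.coeff N = 0 := by
      intro N h1 h2
      have h3 : f = (g.comp h - h ^ p) + h ^ p := by rw [← e]; ring
      rw [h3, coeff_add, pow_char_coeff h h2, add_zero]
      exact coeff_eq_zero_of_natDegree_lt (lt_of_le_of_lt (comp_low (by omega) hg hh) h1)
    have hpd : d ≤ p * d := Nat.le_mul_of_pos_left _ (by omega)
    have hsd : (p - 1) * d = p * d - d := by rw [Nat.sub_mul, one_mul]
    have ndvd : ∀ m, 1 ≤ m → ¬ p ∣ p * m - 1 := by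
      intro m hm hdv
      have h1 : p ≤ p * m := Nat.le_mul_of_pos_right _ (by omega)
      have h2 : p ∣ p * m - (p * m - 1) := Nat.dvd_sub (dvd_mul_right _ _) hdv
      rw [show p * m - (p * m - 1) = 1 by omega] at h2
      have := Nat.le_of_dvd one_pos h2
      omega
    have goal : gt.coeff (d - 1) = 0 ∨ ht.coeff (p - 1) = 0 := by
      by_cases hdv : p ∣ d
      · obtain ⟨m, hm⟩ := hdv
        have hm2 : 2 ≤ m := by
          by_contra hlt
          have : m ≤ 1 := by omega
          have := Nat.mul_le_mul_left p this
          omega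
        have hpm : p * 2 ≤ d := by rw [hm]; exact Nat.mul_le_mul_left p hm2
        have hpd1 : p * (d - 1) = p * d - p := by rw [Nat.mul_sub, mul_one]
        have hpd2 : (d - 2) * p = p * d - p * 2 := by rw [Nat.sub_mul, mul_comm d, mul_comm 2]
        have hpd3 : p * 2 ≤ p * d := Nat.mul_le_mul_left p (by omega)
        have h0 := hf (p * (d - 1) - 1) (by omega) (ndvd _ (by omega))
        have h3 : f = (gt - X ^ d - C (gt.coeff (d - 1)) * X ^ (d - 1)).comp ht + ht ^ d
            + C (gt.coeff (d - 1)) * ht ^ (d - 1) := by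
          rw [← et]; simp only [sub_comp, X_pow_comp, mul_comp, C_comp]; ring
        have h4 : ((gt - X ^ d - C (gt.coeff (d - 1)) * X ^ (d - 1)).comp ht).coeff
            (p * (d - 1) - 1) = 0 := by
          apply coeff_eq_zero_of_natDegree_lt
          rw [natDegree_comp, hht.2.1]
          refine lt_of_le_of_lt (Nat.mul_le_mul_right _ (low_deg2 (by omega) hgt)) ?_
          omega
        have h5 : (ht ^ d).coeff (p * (d - 1) - 1) = 0 := by
          rw [hm, mul_comm p m, pow_mul]
          rw [mul_comm m p, ← hm]
          exact pow_char_coeff _ (ndvd _ (by omega))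
        rw [h3, coeff_add, coeff_add, h4, h5, coeff_C_mul,
          nextCoeff_pow_P hp (by omega) hht, zero_add, zero_add] at h0
        have hdK : ((d - 1 : ℕ) : K) ≠ 0 := by
          rw [Nat.cast_sub (by omega), hm]
          simp
        rcases mul_eq_zero.1 h0 with h6 | h6
        · exact Or.inl h6
        · exact Or.inr ((mul_eq_zero.1 h6).resolve_left hdK)
      · right
        have h0 := hf (p * d - 1) (by omega) (ndvd _ (by omega))
        have hpd1 : (d - 1) * p = p * d - p := by rw [Nat.sub_mul, one_mul, mul_comm]
        have h3 : f = (gt.comp ht - ht ^ d) + ht ^ d := by rw [← et]; ring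
        rw [h3, coeff_add, coeff_eq_zero_of_natDegree_lt
          (lt_of_le_of_lt (comp_low (by omega) hgt hht) (by omega)), zero_add,
          nextCoeff_pow_P hp (by omega) hht] at h0
        refine (mul_eq_zero.1 h0).resolve_left ?_
        exact fun h => hdv ((CharP.cast_eq_zero_iff K p d).1 h)
    rcases goal with h1 | h1
    · exact Or.inl ⟨(gt, ht), ⟨⟨hgt, h1⟩, hht⟩, et⟩
    · exact Or.inr ⟨(gt, ht), ⟨hgt, ⟨hht, h1⟩⟩, et⟩
  have f1 : (P K d).Finite := P_finite d (by omega)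
  have f2 : (P K p).Finite := P_finite p (by omega)
  have f3 : (P0 K d).Finite := f1.subset (fun x hx => hx.1)
  have f4 : (P0 K p).Finite := f2.subset (fun x hx => hx.1)
  refine (Set.ncard_le_ncard hsub (((f3.prod f2).image _).union ((f1.prod f4).image _))).trans ?_
  refine (Set.ncard_union_le _ _).trans ?_
  rw [two_mul]
  apply Nat.add_le_add
  · refine (Set.ncard_image_le (f3.prod f2)).trans ?_
    rw [Set.ncard_prod, P_ncard p (by omega)]
    calc _ ≤ Fintype.card K ^ (d - 2) * Fintype.card K ^ (p - 1) :=
          Nat.mul_le_mul_right _ (P0_ncard d (by omega))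
      _ = _ := by rw [← pow_add]; congr 1; omega
  · refine (Set.ncard_image_le (f1.prod f4)).trans ?_
    rw [Set.ncard_prod, P_ncard d (by omega)]
    calc _ ≤ Fintype.card K ^ (d - 1) * Fintype.card K ^ (p - 2) :=
          Nat.mul_le_mul_left _ (P0_ncard p hp)
      _ = _ := by rw [← pow_add]; congr 1; omega

end DU


namespace DU

lemma Dc_sub {K : Type} [Field K] {n a b : ℕ} (ha : 2 ≤ a) (hb : 2 ≤ b) (hn : a * b = n) :
    Dc K a b ⊆ Duniv K n := by
  rintro f ⟨⟨g, h⟩, ⟨hg, hh⟩, e⟩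
  simp only at hg hh e
  have h1 := comp_P (by omega) hg hh
  rw [e, hn] at h1
  exact ⟨h1.1, h1.2.1, h1.2.2, g, h, by rw [hg.2.1]; exact ha, by rw [hh.2.1]; exact hb, e.symm⟩

lemma Duniv_finite {K : Type} [Field K] [Fintype K] {n : ℕ} (hn : 1 ≤ n) : (Duniv K n).Finite :=
  (P_finite (K := K) n hn).subset (fun _ hx => ⟨hx.1, hx.2.1, hx.2.2.1⟩)

end DU

theorem stmt15 (q : ℕ) (F : Type) [Field F] [Fintype F] (hq : Fintype.card F = q)
    (p : ℕ) (hp : ringChar F = p) (n : ℕ) (hn : 4 ≤ n) (hcomp : ¬ n.Prime)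
    (hnp : n ≠ p ^ 2) (hq5 : 5 < q) :
    (3 - 2 * (q : ℝ)⁻¹) * alphaN q n / 4 ≤ (Set.ncard (Duniv F n) : ℝ) ∧
    (q : ℝ) ^ (2 * Real.sqrt n - 2) / 2 ≤ (3 - 2 * (q : ℝ)⁻¹) * alphaN q n / 4 := by
  subst hq hp
  have hn0 : 0 < n := by omega
  have hlp : n.minFac.Prime := Nat.minFac_prime (by omega)
  have hl2 : 2 ≤ n.minFac := hlp.two_le
  have hnd : n.minFac * (n / n.minFac) = n := Nat.mul_div_cancel' (Nat.minFac_dvd n)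
  have hsq : n.minFac ^ 2 ≤ n := Nat.minFac_sq_le_self hn0 hcomp
  have hmin : ∀ k, 2 ≤ k → k ∣ n / n.minFac → n.minFac ≤ k := fun k hk hkd =>
    Nat.minFac_le_of_dvd hk (hkd.trans ⟨n.minFac, by rw [mul_comm]; exact hnd.symm⟩)
  unfold alphaN
  generalize hl : n.minFac = l at *
  generalize hd : n / l = d at *
  have hld : l ≤ d := by
    rw [← hnd, sq] at hsq
    exact Nat.le_of_mul_le_mul_left hsq (by omega)
  set Q : ℝ := (Fintype.card F : ℝ) with hQ
  have hQ6 : (6 : ℝ) ≤ Q := by rw [hQ]; exact_mod_cast hq5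
  have hQ0 : 0 < Q := by linarith
  have hinv0 : 0 < Q⁻¹ := inv_pos.2 hQ0
  have hinv : Q⁻¹ ≤ 1 / 6 := by
    rw [inv_le_comm₀ hQ0 (by norm_num)]; linarith
  have hfin := DU.Duniv_finite (K := F) (n := n) hn0
  by_cases hsqr : n = l ^ 2
  · rw [if_pos hsqr]
    have hdl : d = l := by
      have : l * d = l * l := by rw [hnd, hsqr, sq]
      exact Nat.eq_of_mul_eq_mul_left (by omega) this
    have hlK : (l : F) ≠ 0 := by
      intro h0
      have h1 : ringChar F ∣ l := (ringChar.spec F l).1 h0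
      have h2 : ringChar F ≠ 1 := CharP.ringChar_ne_one
      have h3 := (Nat.dvd_prime hlp).1 h1
      exact hnp (by rw [h3.resolve_left h2]; exact hsqr)
    have hcard := DU.square_bound (K := F) (by omega : 1 ≤ l) hlK
    have hle := Set.ncard_le_ncard (DU.Dc_sub (K := F) hl2 hl2 (by rw [hsqr, sq])) hfin
    rw [← hcard, ← two_mul] at hle
    have hle' : Q ^ (2 * l - 2) ≤ ((Duniv F n).ncard : ℝ) := by rw [hQ]; exact_mod_cast hle
    have hpos : 0 < Q ^ (2 * l - 2) := by positivity
    refine ⟨?_, ?_⟩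
    · nlinarith [mul_pos hinv0 hpos]
    · have hs : Real.sqrt n = l := by
        rw [hsqr, Nat.cast_pow]; exact Real.sqrt_sq (Nat.cast_nonneg _)
      have he : Q ^ (2 * Real.sqrt n - 2) = Q ^ (2 * l - 2) := by
        rw [hs, ← Real.rpow_natCast, Nat.cast_sub (by omega)]
        push_cast; rfl
      rw [he]
      nlinarith [mul_le_mul_of_nonneg_right hinv hpos.le]
  · rw [if_neg hsqr]
    have hlt : l < d := by
      refine lt_of_le_of_ne hld ?_
      rintro rfl
      exact hsqr (by rw [← hnd, sq])
    have hD1 := DU.D1_bound (K := F) hl2 hlt hmin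
    have hD2 := DU.D2_bound (K := F) hl2 hlt hmin
    have hI : (DU.Dc F l d ∩ DU.Dc F d l).ncard ≤ 2 * Fintype.card F ^ (l + d - 3) := by
      by_cases hlK : (l : F) = 0
      · have h1 : ringChar F ∣ l := (ringChar.spec F l).1 hlK
        have h2 : ringChar F ≠ 1 := CharP.ringChar_ne_one
        have h3 := ((Nat.dvd_prime hlp).1 h1).resolve_left h2
        have : Fact l.Prime := ⟨hlp⟩
        have : CharP F l := ringChar.of_eq h3
        exact DU.wild_inter hlt
      · have := DU.tame_inter (K := F) hl2 hlt hlK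
        omega
    have hU := Set.ncard_union_add_ncard_inter (DU.Dc F l d) (DU.Dc F d l)
      (DU.Dc_finite (by omega) (by omega)) (DU.Dc_finite (by omega) (by omega))
    have hle := Set.ncard_le_ncard (Set.union_subset
      (DU.Dc_sub (K := F) hl2 (by omega : 2 ≤ d) hnd)
      (DU.Dc_sub (K := F) (by omega : 2 ≤ d) hl2 (by rw [mul_comm]; exact hnd))) hfin
    have htot : 2 * Fintype.card F ^ (l + d - 2) ≤
        (Duniv F n).ncard + 4 * Fintype.card F ^ (l + d - 3) := by omega
    have htot' : 2 * Q ^ (l + d - 2) ≤ ((Duniv F n).ncard : ℝ) + 4 * Q ^ (l + d - 3) := by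
      rw [hQ]; exact_mod_cast htot
    have hpos : 0 < Q ^ (l + d - 2) := by positivity
    have h3 : Q ^ (l + d - 3) = Q⁻¹ * Q ^ (l + d - 2) := by
      rw [show l + d - 2 = (l + d - 3) + 1 by omega, pow_succ]
      field_simp
    rw [h3] at htot'
    have hm := mul_le_mul_of_nonneg_right hinv hpos.le
    refine ⟨by nlinarith, ?_⟩
    have hs : 2 * Real.sqrt n ≤ l + d := by
      have h1 : (n : ℝ) = l * d := by exact_mod_cast hnd.symm
      have h2 : Real.sqrt n ≤ ((l : ℝ) + d) / 2 := by
        rw [Real.sqrt_le_left (by positivity), h1]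
        nlinarith [sq_nonneg ((l : ℝ) - d)]
      linarith
    have he : Q ^ (2 * Real.sqrt n - 2) ≤ Q ^ (l + d - 2) := by
      rw [← Real.rpow_natCast, Nat.cast_sub (by omega)]
      apply Real.rpow_le_rpow_of_exponent_le (by linarith)
      push_cast; linarith
    nlinarith
end

section
/- Let F_q be a finite field with q elements and characteristic p, let n ≥ 4 be a composite integer with smallest prime divisor ℓ, and suppose p does not divide n. Define α_n = 2·q^{ℓ + n/ℓ − 2} if n ≠ ℓ², and α_n = q^{2ℓ − 2} if n = ℓ². Then the number #D_n(F_q) of decomposable monic original polynomials of degree n over F_q satisfies |#D_n(F_q) − α_n| ≤ α_n·q^{−n/(3ℓ²)}, where the exponent n/(3ℓ²) is taken as a real number. -/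
open Polynomial

section helpers
variable {F : Type} [Field F]

lemma pow_sub_pow_rigid (A B : F[X]) (hA : A.Monic) (hB : B.Monic) (d k : ℕ)
    (hdA : A.natDegree = d) (hdB : B.natDegree = d) (hk : (k : F) ≠ 0)
    (h : (A ^ k - B ^ k).natDegree < (k - 1) * d) : A = B := by
  by_contra hne
  have hsub : A - B ≠ 0 := sub_ne_zero.mpr hne
  have hS : (∑ i ∈ Finset.range k, A ^ i * B ^ (k - 1 - i)).coeff ((k - 1) * d) = (k : F) := by
    rw [finsetSum_coeff]
    rw [Finset.sum_congr rfl (g := fun _ => (1 : F))]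
    · simp
    · intro i hi
      have hi := Finset.mem_range.mp hi
      have hm : (A ^ i * B ^ (k - 1 - i)).Monic := (hA.pow _).mul (hB.pow _)
      have hd : (A ^ i * B ^ (k - 1 - i)).natDegree = (k - 1) * d := by
        rw [(hA.pow _).natDegree_mul (hB.pow _), hA.natDegree_pow, hB.natDegree_pow, hdA, hdB,
          ← add_mul]
        congr 1
        omega
      have := hm.coeff_natDegree
      rwa [hd] at this
  have hS0 : (∑ i ∈ Finset.range k, A ^ i * B ^ (k - 1 - i)) ≠ 0 := by
    intro h0
    rw [h0] at hS
    exact hk (by simpa using hS.symm)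
  have hSd : (k - 1) * d ≤ (∑ i ∈ Finset.range k, A ^ i * B ^ (k - 1 - i)).natDegree :=
    le_natDegree_of_ne_zero (by rw [hS]; exact hk)
  have hf := (Commute.all A B).geom_sum₂_mul k
  rw [← hf, natDegree_mul hS0 hsub] at h
  omega

lemma complete_power (G H : F[X]) (hG : G.Monic) (k d : ℕ) (hk2 : 2 ≤ k)
    (hGk : G.natDegree = k) (hHd : H.natDegree = d) (hk : (k : F) ≠ 0) :
    (G.comp H - (H + C (G.coeff (k - 1) / k)) ^ k).natDegree ≤ (k - 2) * d := by
  set c := G.coeff (k - 1) / (k : F) with hc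
  have h1 : (G - (X + C c) ^ k).natDegree ≤ k - 2 := by
    rw [natDegree_le_iff_coeff_eq_zero]
    intro N hN
    rw [coeff_sub, coeff_X_add_C_pow]
    rcases lt_trichotomy N k with h | h | h
    · have : N = k - 1 := by omega
      subst this
      rw [show k - (k - 1) = 1 by omega, pow_one, Nat.choose_symm (by omega : 1 ≤ k)]
      rw [hc, Nat.choose_one_right]
      field_simp
      simp
    · subst h
      have := hG.coeff_natDegree
      rw [hGk] at this
      simp [this]
    · rw [coeff_eq_zero_of_natDegree_lt (by omega), Nat.choose_eq_zero_of_lt h]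
      simp
  have h2 : G.comp H - (H + C c) ^ k = (G - (X + C c) ^ k).comp H := by
    simp
  rw [h2, natDegree_comp, hHd]
  exact Nat.mul_le_mul_right _ h1

/-- Monic original polynomials of degree `k`. -/
def POrig (F : Type) [Field F] (k : ℕ) : Set F[X] :=
  {f | f.Monic ∧ f.natDegree = k ∧ f.eval 0 = 0}

lemma right_unique (k d : ℕ) (hk2 : 2 ≤ k) (hd : 1 ≤ d) (hk : (k : F) ≠ 0)
    (G G' H H' : F[X]) (hG : G ∈ POrig F k) (hG' : G' ∈ POrig F k)
    (hH : H ∈ POrig F d) (hH' : H' ∈ POrig F d)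
    (h : (G.comp H - G'.comp H').natDegree < (k - 1) * d) :
    H = H' ∧ G.coeff (k - 1) = G'.coeff (k - 1) := by
  have h1 := complete_power G H hG.1 k d hk2 hG.2.1 hH.2.1 hk
  have h2 := complete_power G' H' hG'.1 k d hk2 hG'.2.1 hH'.2.1 hk
  set c := G.coeff (k - 1) / (k : F) with hc
  set c' := G'.coeff (k - 1) / (k : F) with hc'
  have hlt : (k - 2) * d < (k - 1) * d := Nat.mul_lt_mul_of_pos_right (by omega) (by omega)
  have hmon : ∀ (P : F[X]) (a : F), P ∈ POrig F d → (P + C a).Monic ∧ (P + C a).natDegree = d := by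
    intro P a hP
    refine ⟨hP.1.add_of_left ?_, by rw [natDegree_add_C]; exact hP.2.1⟩
    refine lt_of_le_of_lt degree_C_le ?_
    rw [← natDegree_pos_iff_degree_pos, hP.2.1]
    omega
  have heq : H + C c = H' + C c' := by
    refine pow_sub_pow_rigid _ _ (hmon H c hH).1 (hmon H' c' hH').1 d k (hmon H c hH).2
      (hmon H' c' hH').2 hk ?_
    have : (H + C c) ^ k - (H' + C c') ^ k = (G.comp H - G'.comp H')
        + ((G'.comp H' - (H' + C c') ^ k) - (G.comp H - (H + C c) ^ k)) := by ring
    rw [this]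
    refine lt_of_le_of_lt (natDegree_add_le _ _) (max_lt h ?_)
    refine lt_of_le_of_lt (natDegree_sub_le _ _) (max_lt ?_ ?_) <;> omega
  have hcc : c = c' := by
    have := congrArg (eval 0) heq
    simpa [hH.2.2, hH'.2.2] using this
  refine ⟨?_, ?_⟩
  · rw [hcc] at heq
    exact add_right_cancel heq
  · rw [hc, hc'] at hcc
    field_simp at hcc
    exact hcc

lemma comp_inj_left (G G' H : F[X]) (hH : 1 ≤ H.natDegree) (h : G.comp H = G'.comp H) :
    G = G' := by
  have h0 : (G - G').comp H = 0 := by simp [h]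
  rcases comp_eq_zero_iff.mp h0 with h1 | ⟨_, h2⟩
  · exact sub_eq_zero.mp h1
  · rw [h2] at hH
    simp at hH

/-- the set of compositions with left degree `k`, right degree `d` -/
def DSet (F : Type) [Field F] (k d : ℕ) : Set F[X] :=
  (fun x : F[X] × F[X] => x.1.comp x.2) '' (POrig F k ×ˢ POrig F d)

lemma comp_injOn (k d : ℕ) (hk2 : 2 ≤ k) (hd : 1 ≤ d) (hk : (k : F) ≠ 0) :
    Set.InjOn (fun x : F[X] × F[X] => x.1.comp x.2) (POrig F k ×ˢ POrig F d) := by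
  rintro ⟨G, H⟩ ⟨hG, hH⟩ ⟨G', H'⟩ ⟨hG', hH'⟩ h
  simp only at h hG hH hG' hH'
  have := right_unique k d hk2 hd hk G G' H H' hG hG' hH hH' (by
    rw [h, sub_self, natDegree_zero]
    exact Nat.mul_pos (by omega) (by omega))
  obtain ⟨rfl, -⟩ := this
  rw [comp_inj_left G G' H (by rw [hH.2.1]; exact hd) h]

lemma porig_coeff_zero {k : ℕ} {f : F[X]} (hf : f ∈ POrig F k) : f.coeff 0 = 0 := by
  rw [coeff_zero_eq_eval_zero]; exact hf.2.2

lemma porig_ext {k : ℕ} {f g : F[X]} (hf : f ∈ POrig F k) (hg : g ∈ POrig F k)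
    (h : ∀ i, 1 ≤ i → i < k → f.coeff i = g.coeff i) : f = g := by
  ext i
  rcases Nat.eq_zero_or_pos i with rfl | hi
  · rw [porig_coeff_zero hf, porig_coeff_zero hg]
  rcases lt_trichotomy i k with h1 | h1 | h1
  · exact h i hi h1
  · have a := hf.1.coeff_natDegree
    have b := hg.1.coeff_natDegree
    rw [hf.2.1] at a
    rw [hg.2.1] at b
    rw [h1, a, b]
  · rw [coeff_eq_zero_of_natDegree_lt (by rw [hf.2.1]; exact h1),
      coeff_eq_zero_of_natDegree_lt (by rw [hg.2.1]; exact h1)]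

/-- the coefficient map gives a bijection -/
lemma porig_bij (k : ℕ) (hk : 1 ≤ k) :
    Set.BijOn (fun (f : F[X]) (i : Fin (k - 1)) => f.coeff (i + 1)) (POrig F k) Set.univ := by
  refine ⟨fun _ _ => trivial, ?_, ?_⟩
  · intro f hf g hg h
    refine porig_ext hf hg ?_
    intro i h1 h2
    have := congrFun h ⟨i - 1, by omega⟩
    simpa [Nat.sub_add_cancel h1] using this
  · intro a _
    set s : F[X] := ∑ i : Fin (k - 1), C (a i) * X ^ ((i : ℕ) + 1) with hs
    have hsd : s.degree < k := by
      refine (degree_sum_le _ _).trans_lt ?_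
      rw [Finset.sup_lt_iff (by exact WithBot.bot_lt_coe k)]
      intro i _
      refine (degree_C_mul_X_pow_le _ _).trans_lt ?_
      have := i.2
      exact_mod_cast (by omega : (i : ℕ) + 1 < k)
    refine ⟨X ^ k + s, ⟨monic_X_pow_add hsd, ?_, ?_⟩, ?_⟩
    · apply natDegree_eq_of_degree_eq_some
      rw [degree_add_eq_left_of_degree_lt (by rwa [degree_X_pow]), degree_X_pow]
    · rw [hs, eval_add, eval_finsetSum]
      simp
      omega
    · funext j
      have := j.2
      simp only [coeff_add, coeff_X_pow, hs, finsetSum_coeff, coeff_C_mul]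
      rw [Finset.sum_eq_single j]
      · simp; omega
      · intro b _ hb
        have : (j : ℕ) ≠ b := fun h => hb (Fin.ext h.symm)
        simp [this]
      · simp

lemma porig_finite [Fintype F] (k : ℕ) (hk : 1 ≤ k) : (POrig F k).Finite :=
  Set.Finite.of_injOn (fun _ _ => Set.mem_univ _) (porig_bij k hk).injOn Set.finite_univ

lemma porig_ncard [Fintype F] (k : ℕ) (hk : 1 ≤ k) :
    (POrig F k).ncard = Fintype.card F ^ (k - 1) := by
  have h := porig_bij (F := F) k hk
  rw [← h.injOn.ncard_image, h.image_eq, Set.ncard_univ]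
  simp

lemma dset_finite [Fintype F] (k d : ℕ) (hk : 1 ≤ k) (hd : 1 ≤ d) : (DSet F k d).Finite :=
  ((porig_finite k hk).prod (porig_finite d hd)).image _

lemma dset_ncard_le [Fintype F] (k d : ℕ) (hk : 1 ≤ k) (hd : 1 ≤ d) :
    (DSet F k d).ncard ≤ Fintype.card F ^ (k + d - 2) := by
  refine (Set.ncard_image_le ((porig_finite k hk).prod (porig_finite d hd))).trans ?_
  rw [Set.ncard_prod, porig_ncard k hk, porig_ncard d hd, ← pow_add]
  exact le_of_eq (by congr 1; omega)

lemma dset_ncard [Fintype F] (k d : ℕ) (hk2 : 2 ≤ k) (hd : 1 ≤ d) (hk : (k : F) ≠ 0) :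
    (DSet F k d).ncard = Fintype.card F ^ (k + d - 2) := by
  rw [DSet, (comp_injOn k d hk2 hd hk).ncard_image]
  rw [Set.ncard_prod, porig_ncard k (by omega), porig_ncard d hd, ← pow_add]
  congr 1; omega

lemma inter_ncard [Fintype F] (l m : ℕ) (hl2 : 2 ≤ l) (hm : 1 ≤ m) (hl : (l : F) ≠ 0) :
    (DSet F l m ∩ DSet F m l).ncard ≤ Fintype.card F ^ ((l - 1) + m / l + (l - 2)) := by
  classical
  have hex : ∀ f : F[X], ∃ G H g h : F[X], f ∈ DSet F l m ∩ DSet F m l →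
      G ∈ POrig F l ∧ H ∈ POrig F m ∧ g ∈ POrig F m ∧ h ∈ POrig F l ∧
      G.comp H = f ∧ g.comp h = f := by
    intro f
    by_cases hf : f ∈ DSet F l m ∩ DSet F m l
    · obtain ⟨⟨⟨G, H⟩, ⟨hG, hH⟩, h1⟩, ⟨⟨g, h⟩, ⟨hg, hh⟩, h2⟩⟩ := hf
      exact ⟨G, H, g, h, fun _ => ⟨hG, hH, hg, hh, h1, h2⟩⟩
    · exact ⟨0, 0, 0, 0, fun h => absurd h hf⟩
  choose G H g h hall using hex
  let φ : F[X] → (Fin (l - 1) → F) × (Fin (m / l) → F) × (Fin (l - 2) → F) := fun f =>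
    (fun i => (h f).coeff (i + 1), fun i => (g f).coeff (m - 1 - i), fun i => (G f).coeff (i + 1))
  have hinj : Set.InjOn φ (DSet F l m ∩ DSet F m l) := by
    intro f hf f' hf' he
    obtain ⟨hG, hH, hg, hh, e1, e2⟩ := hall f hf
    obtain ⟨hG', hH', hg', hh', e1', e2'⟩ := hall f' hf'
    simp only [φ, Prod.mk.injEq] at he
    obtain ⟨he1, he2, he3⟩ := he
    have hhh : h f = h f' := (porig_bij l (by omega)).injOn hh hh' he1
    have hklt : m / l < m := Nat.div_lt_self (by omega) (by omega)
    have hgd : (g f - g f').natDegree ≤ m - 1 - m / l := by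
      rw [natDegree_le_iff_coeff_eq_zero]
      intro N hN
      rw [coeff_sub, sub_eq_zero]
      rcases lt_trichotomy N m with h1 | h1 | h1
      · have := congrFun he2 ⟨m - 1 - N, by omega⟩
        simpa [show m - 1 - (m - 1 - N) = N by omega] using this
      · have a := hg.1.coeff_natDegree
        have b := hg'.1.coeff_natDegree
        rw [hg.2.1] at a
        rw [hg'.2.1] at b
        rw [h1, a, b]
      · rw [coeff_eq_zero_of_natDegree_lt (by rw [hg.2.1]; exact h1),
          coeff_eq_zero_of_natDegree_lt (by rw [hg'.2.1]; exact h1)]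
    have hlt : ((G f).comp (H f) - (G f').comp (H f')).natDegree < (l - 1) * m := by
      rw [e1, e1', ← e2, ← e2', ← hhh, ← sub_comp, natDegree_comp, hh.2.1]
      refine lt_of_le_of_lt (Nat.mul_le_mul_right _ hgd) ?_
      have h3 : m < l * (m / l + 1) := Nat.lt_mul_div_succ m (by omega)
      obtain ⟨r, hr⟩ : ∃ r, m = m / l + 1 + r := ⟨m - (m / l + 1), by omega⟩
      rw [show m - 1 - m / l = r by omega]
      obtain ⟨l', rfl⟩ : ∃ l', l = l' + 1 := ⟨l - 1, by omega⟩
      simp only [Nat.add_sub_cancel]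
      have h4 : (l' + 1) * m = (l' + 1) * (m / (l' + 1) + 1) + (l' + 1) * r := by
        conv_lhs => rw [hr]
        ring
      nlinarith
    obtain ⟨hHH, hc⟩ := right_unique l m hl2 hm hl _ _ _ _ hG hG' hH hH' hlt
    have hGG : G f = G f' := by
      refine porig_ext hG hG' ?_
      intro i h1 h2
      rcases Nat.lt_or_ge i (l - 1) with h3 | h3
      · have := congrFun he3 ⟨i - 1, by omega⟩
        simpa [Nat.sub_add_cancel h1] using this
      · rw [show i = l - 1 by omega]
        exact hc
    rw [← e1, ← e1', hGG, hHH]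
  have := Set.ncard_le_ncard_of_injOn φ (fun f _ => Set.mem_univ (φ f)) hinj Set.finite_univ
  refine this.trans (le_of_eq ?_)
  rw [Set.ncard_univ]
  simp [pow_add, mul_assoc]

lemma duniv_eq (n : ℕ) (hn : 1 ≤ n) : Duniv F n =
    ⋃ e ∈ n.divisors.filter (fun e => 1 < e ∧ e < n), DSet F e (n / e) := by
  ext f
  simp only [Set.mem_iUnion, Finset.mem_filter, Nat.mem_divisors, exists_prop]
  constructor
  · rintro ⟨hmon, hdeg, h0, g, h, hg, hh, hf⟩
    have hh0 : h ≠ 0 := by rintro rfl; simp at hh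
    set c := h.leadingCoeff with hc
    have hc0 : c ≠ 0 := leadingCoeff_ne_zero.mpr hh0
    set b := h.eval 0 with hb
    set h' : F[X] := C c⁻¹ * (h - C b) with hh'
    set g' : F[X] := g.comp (C c * X + C b) with hg'
    have hdh' : h'.natDegree = h.natDegree := by
      rw [hh', natDegree_C_mul (inv_ne_zero hc0), natDegree_sub_C]
    have hdg' : g'.natDegree = g.natDegree := by
      rw [hg', natDegree_comp, natDegree_linear hc0, mul_one]
    have hcomp : g'.comp h' = f := by
      rw [hg', comp_assoc, hf]
      congr 1
      simp only [add_comp, mul_comp, C_comp, X_comp, hh']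
      rw [← mul_assoc, ← C_mul, mul_inv_cancel₀ hc0]
      simp
    have hmh' : h'.Monic := by
      rw [Monic, leadingCoeff, hdh', hh', coeff_C_mul, coeff_sub, coeff_C,
        if_neg (by omega), sub_zero]
      exact inv_mul_cancel₀ hc0
    have hmg' : g'.Monic := by
      have := leadingCoeff_comp (p := g') (q := h') (by omega)
      rw [hcomp, hmon.leadingCoeff, hmh'.leadingCoeff, one_pow, mul_one] at this
      exact this.symm
    have h'0 : h'.eval 0 = 0 := by simp [hh', hb]
    have g'0 : g'.eval 0 = 0 := by
      have : (g'.comp h').eval 0 = 0 := by rw [hcomp]; exact h0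
      rwa [eval_comp, h'0] at this
    have hmul : g.natDegree * h.natDegree = n := by rw [← hdeg, hf, natDegree_comp]
    refine ⟨g.natDegree, ⟨⟨⟨_, hmul.symm⟩, by omega⟩, by omega, by nlinarith⟩, ⟨(g', h'), ⟨⟨hmg', hdg', g'0⟩,
      ⟨hmh', ?_, h'0⟩⟩, hcomp⟩⟩
    rw [hdh', ← hmul, Nat.mul_div_cancel_left _ (by omega)]
  · rintro ⟨e, ⟨⟨⟨d, hd⟩, hn0⟩, he1, hen⟩, ⟨⟨g, h⟩, ⟨hg, hh⟩, hf⟩⟩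
    simp only at hg hh hf
    have hdd : n / e = d := by rw [hd, Nat.mul_div_cancel_left _ (by omega)]
    rw [hdd] at hh
    have hd2 : 2 ≤ d := by
      by_contra hlt
      have : d ≤ 1 := by omega
      nlinarith
    refine ⟨?_, ?_, ?_, g, h, by rw [hg.2.1]; omega, by rw [hh.2.1]; omega, hf.symm⟩
    · rw [← hf]
      exact hg.1.comp hh.1 (by rw [hh.2.1]; omega)
    · rw [← hf, natDegree_comp, hg.2.1, hh.2.1, hd]
    · rw [← hf, eval_comp, hh.2.2, hg.2.2]

end helpers

/-- middle divisors of `n = l * m` -/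
def midDiv (l m : ℕ) : Finset ℕ := (l * m).divisors.filter (fun e => l < e ∧ e < m)

lemma rpow_pow_le {q : ℝ} (hq : 1 ≤ q) {a b : ℕ} {x : ℝ} (h : (a : ℝ) ≤ b - x) :
    q ^ a ≤ q ^ b * q ^ (-x) := by
  rw [← Real.rpow_natCast, ← Real.rpow_natCast, ← Real.rpow_add (by linarith)]
  exact Real.rpow_le_rpow_of_exponent_le hq (by linarith)

lemma num_inter (q : ℝ) (hq : 1 ≤ q) (l m : ℕ) (hl : 2 ≤ l) (hm : l + 1 ≤ m) :
    q ^ ((l - 1) + m / l + (l - 2)) ≤ q ^ (l + m - 2) * q ^ (-((m : ℝ) / (3 * l))) := by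
  apply rpow_pow_le hq
  have h1 : ((m / l : ℕ) : ℝ) ≤ (m : ℝ) / l := Nat.cast_div_le
  obtain ⟨a, rfl⟩ : ∃ a, l = a + 2 := ⟨l - 2, by omega⟩
  obtain ⟨b, rfl⟩ : ∃ b, m = a + 3 + b := ⟨m - (a + 3), by omega⟩
  rw [show a + 2 - 1 = a + 1 by omega, show a + 2 - 2 = a by omega,
    show a + 2 + (a + 3 + b) - 2 = 2 * a + b + 3 by omega]
  push_cast at h1 ⊢
  have ha : (0 : ℝ) ≤ a := Nat.cast_nonneg a
  have hb : (0 : ℝ) ≤ b := Nat.cast_nonneg b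
  have h2 : ((a : ℝ) + 3 + b) / (a + 2) + (a + 3 + b) / (3 * (a + 2)) ≤ b + 2 := by
    rw [div_add_div _ _ (by positivity) (by positivity), div_le_iff₀ (by positivity)]
    have : 0 ≤ (a : ℝ) * b := mul_nonneg ha hb
    nlinarith [mul_nonneg ha this, mul_nonneg ha ha, mul_nonneg ha (mul_nonneg ha ha)]
  linarith

/-- the divisibility input: `l * e ≤ m` for a middle divisor `e ≤ √n` -/
lemma mid_ge (l m e : ℕ) (hl : 2 ≤ l) (hmin : (l * m).minFac = l) (he : e ∣ l * m)
    (hle : l < e) (hem : e < m) (hsq : e * e ≤ l * m) : l * e ≤ m := by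
  have hlp : l.Prime := by
    rw [← hmin]; exact Nat.minFac_prime (by nlinarith)
  have hbig : ∀ j, 2 ≤ j → j ∣ l * m → l ≤ j := by
    intro j hj hjd
    have := Nat.minFac_le_of_dvd hj hjd
    omega
  by_cases hd : l ∣ e
  · obtain ⟨j, rfl⟩ := hd
    have hj : 2 ≤ j := by
      by_contra h
      have : j ≤ 1 := by omega
      nlinarith
    have hlj := hbig j hj ((Dvd.intro_left l rfl).trans he)
    have : j * (l * j) ≤ m := by
      by_contra h
      push Not at h
      nlinarith
    nlinarith
  · have hc : Nat.Coprime e l := ((Nat.Prime.coprime_iff_not_dvd hlp).mpr hd).symm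
    obtain ⟨k, rfl⟩ := hc.dvd_of_dvd_mul_left he
    have hk : 2 ≤ k := by
      by_contra h
      have : k ≤ 1 := by omega
      nlinarith
    have := hbig k hk ⟨l * e, by ring⟩
    nlinarith

lemma mid_mem_symm (l m e : ℕ) (hl : 2 ≤ l) (hm : 1 ≤ m) (he : e ∈ midDiv l m) :
    l * m / e ∈ midDiv l m ∧ l * m / (l * m / e) = e := by
  simp only [midDiv, Finset.mem_filter, Nat.mem_divisors] at he ⊢
  obtain ⟨⟨⟨d, hd⟩, h0⟩, h1, h2⟩ := he
  have e1 : l * m / e = d := by rw [hd, Nat.mul_div_cancel_left _ (by omega)]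
  have hd0 : 0 < d := by
    rcases Nat.eq_zero_or_pos d with h | h
    · subst h; simp at hd; omega
    · exact h
  have e2 : l * m / d = e := by rw [hd, Nat.mul_div_cancel _ hd0]
  rw [e1]
  refine ⟨⟨⟨⟨e, by rw [hd]; ring⟩, h0⟩, ?_, ?_⟩, e2⟩
  · by_contra h
    push Not at h
    nlinarith
  · by_contra h
    push Not at h
    nlinarith

lemma geom_half (s : Finset ℕ) (a : ℕ) (hs : ∀ e ∈ s, a + 1 ≤ e) (q : ℝ) (hq : 2 ≤ q) :
    ∑ e ∈ s, (q⁻¹) ^ (e - a) ≤ 1 := by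
  have h1 : ∑ e ∈ s, (q⁻¹) ^ (e - a) ≤ ∑ e ∈ s, ((1 / 2 : ℝ)) ^ (e - a) := by
    refine Finset.sum_le_sum fun e _ => ?_
    refine pow_le_pow_left₀ (by positivity) ?_ _
    rw [one_div]
    exact inv_anti₀ (by norm_num) hq
  refine h1.trans ?_
  have h2 : ∑ e ∈ s, ((1 / 2 : ℝ)) ^ (e - a) = ∑ j ∈ s.image (fun e => e - (a + 1)),
      (1 / 2 : ℝ) * (1 / 2) ^ j := by
    rw [Finset.sum_image]
    · refine Finset.sum_congr rfl fun e he => ?_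
      rw [← pow_succ']
      congr 1
      have := hs e he
      omega
    · intro x hx y hy h
      have := hs x hx
      have := hs y hy
      simp only at h
      omega
  rw [h2, ← Finset.mul_sum]
  have h3 := Summable.sum_le_tsum (s.image (fun e => e - (a + 1))) (fun i _ => by positivity)
    summable_geometric_two
  rw [tsum_geometric_two] at h3
  linarith

lemma num_mid_odd (q : ℝ) (hq : 2 ≤ q) (l m : ℕ) (hl : 3 ≤ l) (hm : l < m)
    (hodd : Odd (l * m))
    (hmin : (l * m).minFac = l) :
    ∑ e ∈ midDiv l m, q ^ (e + l * m / e - 2) ≤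
      2 * q ^ (l + m - 2) * q ^ (-((m : ℝ) / (3 * l))) := by
  set B : ℝ := q ^ (l + m - 2) * q ^ (-((m : ℝ) / (3 * l))) with hB
  have hB0 : 0 ≤ B := by positivity
  have key : ∀ e ∈ midDiv l m, e * e ≤ l * m →
      q ^ (e + l * m / e - 2) ≤ B * (q⁻¹) ^ (e - (l + 1)) := by
    intro e he hsq
    simp only [midDiv, Finset.mem_filter, Nat.mem_divisors] at he
    obtain ⟨⟨hd, h0⟩, h1, h2⟩ := he
    have hge := mid_ge l m e (by omega) hmin hd h1 h2 hsq
    have hcast : ((l * m / e : ℕ) : ℝ) = (l * m : ℝ) / e := by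
      rw [Nat.cast_div hd (by norm_cast; omega)]; push_cast; rfl
    have hq0 : (0 : ℝ) < q := by linarith
    rw [hB, mul_assoc, inv_pow, ← Real.rpow_natCast q (e - (l+1)), ← Real.rpow_neg hq0.le,
      ← Real.rpow_add hq0, ← neg_add]
    apply rpow_pow_le (by linarith)
    have hc0 : 0 < l * m / e := Nat.div_pos (Nat.le_of_dvd (by nlinarith) hd) (by omega)
    rw [Nat.cast_sub (by omega), Nat.cast_sub (by omega), Nat.cast_sub (by omega)]
    push_cast
    rw [hcast]
    have hl' : (3 : ℝ) ≤ l := by exact_mod_cast hl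
    have he' : (l : ℝ) + 1 ≤ e := by exact_mod_cast h1
    have hm' : (l : ℝ) * e ≤ m := by exact_mod_cast hge
    have hepos : (0 : ℝ) < e := by linarith
    have hmain : (l * m : ℝ) / e + m / (3 * l) ≤ m + 2 * l + 1 - 2 * e := by
      rw [div_add_div _ _ (by positivity) (by positivity), div_le_iff₀ (by positivity)]
      have hj : (0 : ℝ) ≤ e - l - 1 := by linarith
      have hl3 : (0 : ℝ) ≤ l - 3 := by linarith
      have c1 : (0 : ℝ) ≤ 3 * l * e - 3 * l * l - e := by
        nlinarith [mul_nonneg hj hl3]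
      have c2 : (0 : ℝ) ≤ 3 * (l * e + 2 * l + 1 - 2 * e) - 3 * l * l - e := by
        nlinarith [mul_nonneg hj hl3]
      have c3 : (0 : ℝ) ≤ (m - l * e) * (3 * l * e - 3 * l * l - e) :=
        mul_nonneg (by linarith) c1
      have c4 : (0 : ℝ) ≤ (l * e) * (3 * (l * e + 2 * l + 1 - 2 * e) - 3 * l * l - e) :=
        mul_nonneg (by positivity) c2
      nlinarith
    linarith
  have hsum : ∀ e ∈ midDiv l m, q ^ (e + l * m / e - 2) ≤
      B * (q⁻¹) ^ (e - (l + 1)) + B * (q⁻¹) ^ (l * m / e - (l + 1)) := by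
    intro e he
    have hs := mid_mem_symm l m e (by omega) (by omega) he
    have p1 : 0 ≤ B * (q⁻¹) ^ (e - (l + 1)) := by positivity
    have p2 : 0 ≤ B * (q⁻¹) ^ (l * m / e - (l + 1)) := by positivity
    by_cases hsq : e * e ≤ l * m
    · linarith [key e he hsq]
    · have hh := key _ hs.1 (by
        have : l * m / e * e ≤ l * m := Nat.div_mul_le_self _ _
        have : l * m / e ≤ e := by
          by_contra h
          push Not at h
          nlinarith
        exact (Nat.mul_le_mul_left _ this).trans (Nat.div_mul_le_self _ _))
      rw [hs.2, add_comm (l * m / e) e] at hh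
      linarith
  have hgt : ∀ e ∈ midDiv l m, l + 1 + 1 ≤ e := by
    intro e he
    simp only [midDiv, Finset.mem_filter, Nat.mem_divisors] at he
    obtain ⟨⟨hd, h0⟩, h1, h2⟩ := he
    have o1 : Odd e := hodd.of_dvd_nat hd
    have o2 : Odd l := hodd.of_dvd_nat ⟨m, rfl⟩
    obtain ⟨a, ha⟩ := o1
    obtain ⟨b, hb⟩ := o2
    omega
  have g1 := geom_half (midDiv l m) (l + 1) hgt q hq
  have g2 : ∑ e ∈ midDiv l m, (q⁻¹) ^ (l * m / e - (l + 1)) =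
      ∑ e ∈ midDiv l m, (q⁻¹) ^ (e - (l + 1)) := by
    refine Finset.sum_nbij' (fun e => l * m / e) (fun e => l * m / e) ?_ ?_ ?_ ?_ ?_
    · intro e he; exact (mid_mem_symm l m e (by omega) (by omega) he).1
    · intro e he; exact (mid_mem_symm l m e (by omega) (by omega) he).1
    · intro e he; exact (mid_mem_symm l m e (by omega) (by omega) he).2
    · intro e he; exact (mid_mem_symm l m e (by omega) (by omega) he).2
    · intro e he; rfl
  refine (Finset.sum_le_sum hsum).trans ?_
  rw [Finset.sum_add_distrib, ← Finset.mul_sum, ← Finset.mul_sum, g2]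
  nlinarith

lemma mid_card_two (m : ℕ) (hm : 6 ≤ m) : ((midDiv 2 m).card : ℝ) ≤ 2 * 3 ^ ((m : ℝ) / 6 - 1) := by
  by_cases h : m < 12
  · have h1 : (midDiv 2 m).card ≤ 2 := by
      interval_cases m <;> decide
    have h2 : (1 : ℝ) ≤ 3 ^ ((m : ℝ) / 6 - 1) := by
      apply Real.one_le_rpow (by norm_num)
      have : (6 : ℝ) ≤ m := by exact_mod_cast hm
      linarith
    have : ((midDiv 2 m).card : ℝ) ≤ 2 := by exact_mod_cast h1
    linarith
  · push Not at h
    set K := Nat.sqrt (2 * m) with hK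
    have hK1 : K * K ≤ 2 * m := Nat.sqrt_le _
    have hK2 : 2 * m < (K + 1) * (K + 1) := Nat.lt_succ_sqrt _
    have hsub : midDiv 2 m ⊆ Finset.Icc 3 K ∪ (Finset.Icc 3 K).image (fun e => 2 * m / e) := by
      intro e he
      have hs := mid_mem_symm 2 m e (by omega) (by omega) he
      have hlt : ∀ x ∈ midDiv 2 m, 3 ≤ x := by
        intro x hx
        simp only [midDiv, Finset.mem_filter] at hx
        omega
      simp only [Finset.mem_union, Finset.mem_Icc, Finset.mem_image]
      by_cases hle : e ≤ K
      · exact Or.inl ⟨hlt e he, hle⟩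
      · refine Or.inr ⟨2 * m / e, ⟨hlt _ hs.1, ?_⟩, hs.2⟩
        have : 2 * m / e * e ≤ 2 * m := Nat.div_mul_le_self _ _
        by_contra hc
        push Not at hc hle
        nlinarith
    have hcard : (midDiv 2 m).card ≤ 2 * (K - 2) := by
      refine (Finset.card_le_card hsub).trans ((Finset.card_union_le _ _).trans ?_)
      have := Finset.card_image_le (s := Finset.Icc 3 K) (f := fun e => 2 * m / e)
      simp only [Nat.card_Icc] at this ⊢
      omega
    have hK4 : 4 ≤ K := by
      by_contra hc
      have : K + 1 ≤ 4 := by omega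
      nlinarith
    have hKm : 3 * K ≤ m + 3 := by
      rcases Nat.lt_or_ge K 5 with h5 | h5
      · omega
      · nlinarith
    have hm' : (12 : ℝ) ≤ m := by exact_mod_cast h
    have hb := one_add_mul_self_le_rpow_one_add (s := (2 : ℝ)) (by norm_num)
      (p := (m : ℝ) / 6 - 1) (by linarith)
    have hcR : ((midDiv 2 m).card : ℝ) ≤ 2 * ((K : ℝ) - 2) := by
      have : ((midDiv 2 m).card : ℝ) ≤ ((2 * (K - 2) : ℕ) : ℝ) := by exact_mod_cast hcard
      rw [Nat.cast_mul, Nat.cast_sub (by omega)] at this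
      exact_mod_cast this
    have hKR : 3 * (K : ℝ) ≤ m + 3 := by exact_mod_cast hKm
    rw [show (1 : ℝ) + 2 = 3 by norm_num] at hb
    linarith

lemma num_mid_two (q : ℝ) (hq : 3 ≤ q) (m : ℕ) (hm : 2 < m) :
    ∑ e ∈ midDiv 2 m, q ^ (e + 2 * m / e - 2) ≤
      2 * q ^ (2 + m - 2) * q ^ (-((m : ℝ) / (3 * (2 : ℕ)))) := by
  by_cases h6 : m < 6
  · have : midDiv 2 m = ∅ := by interval_cases m <;> decide
    rw [this, Finset.sum_empty]
    positivity
  push Not at h6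
  have hq0 : (0 : ℝ) < q := by linarith
  have key : ∀ e ∈ midDiv 2 m, q ^ (e + 2 * m / e - 2) ≤
      q ^ (2 + m - 2) * q ^ (-((m : ℝ) / (3 * (2 : ℕ)) + (m / 6 - 1))) := by
    intro e he
    have hs := (mid_mem_symm 2 m e (by omega) (by omega) he).1
    simp only [midDiv, Finset.mem_filter, Nat.mem_divisors] at he hs
    obtain ⟨⟨hd, h0⟩, h1, h2⟩ := he
    have hmul : 2 * m / e * e = 2 * m := Nat.div_mul_cancel hd
    set d := 2 * m / e with hdd
    have hd1 := hs.2.1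
    apply rpow_pow_le (by linarith)
    rw [Nat.cast_sub (by omega), Nat.cast_sub (by omega)]
    push_cast
    have hmR : (d : ℝ) * e = 2 * m := by exact_mod_cast hmul
    have a1 : (3 : ℝ) ≤ e := by exact_mod_cast h1
    have a2 : (3 : ℝ) ≤ d := by exact_mod_cast hd1
    nlinarith [mul_nonneg (sub_nonneg.mpr a1) (sub_nonneg.mpr a2)]
  refine (Finset.sum_le_card_nsmul _ _ _ key).trans ?_
  rw [nsmul_eq_mul, neg_add, Real.rpow_add hq0]
  have hm' : (6 : ℝ) ≤ m := by exact_mod_cast h6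
  have hc : ((midDiv 2 m).card : ℝ) ≤ 2 * q ^ ((m : ℝ) / 6 - 1) :=
    (mid_card_two m h6).trans (by
      gcongr
      linarith)
  have hone : q ^ ((m : ℝ) / 6 - 1) * q ^ (-((m : ℝ) / 6 - 1)) = 1 := by
    rw [← Real.rpow_add hq0]; simp
  set Y := q ^ (-((m : ℝ) / 6 - 1)) with hY
  have hY0 : 0 < Y := by positivity
  have : ((midDiv 2 m).card : ℝ) * Y ≤ 2 := by
    calc _ ≤ 2 * q ^ ((m : ℝ) / 6 - 1) * Y := by gcongr
      _ = 2 := by rw [mul_assoc, hone]; norm_num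
  calc _ = ((midDiv 2 m).card * Y) * (q ^ (2 + m - 2) * q ^ (-((m : ℝ) / (3 * (2 : ℕ))))) := by ring
    _ ≤ 2 * (q ^ (2 + m - 2) * q ^ (-((m : ℝ) / (3 * (2 : ℕ))))) := by gcongr
    _ = _ := by ring

lemma divs_split (l m : ℕ) (hl : 2 ≤ l) (hm : l < m) (hmin : (l * m).minFac = l) :
    (l * m).divisors.filter (fun e => 1 < e ∧ e < l * m) = insert l (insert m (midDiv l m)) := by
  ext e
  simp only [midDiv, Finset.mem_filter, Nat.mem_divisors, Finset.mem_insert]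
  have hn0 : l * m ≠ 0 := (Nat.mul_pos (by omega) (by omega)).ne'
  constructor
  · rintro ⟨⟨hd, -⟩, h1, h2⟩
    have hle : l ≤ e := by
      have := Nat.minFac_le_of_dvd h1 hd
      omega
    obtain ⟨d, hd'⟩ := hd
    have hd2 : 2 ≤ d := by
      by_contra h
      have : d ≤ 1 := by omega
      nlinarith
    have hld : l ≤ d := by
      have := Nat.minFac_le_of_dvd hd2 (⟨e, by rw [hd']; ring⟩ : d ∣ l * m)
      omega
    have hem : e ≤ m := by
      by_contra h
      push Not at h
      nlinarith
    rcases Nat.lt_or_ge l e with a | a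
    · rcases Nat.lt_or_ge e m with b | b
      · exact Or.inr (Or.inr ⟨⟨⟨d, hd'⟩, hn0⟩, a, b⟩)
      · exact Or.inr (Or.inl (by omega))
    · exact Or.inl (by omega)
  · rintro (rfl | rfl | ⟨⟨hd, -⟩, h1, h2⟩)
    · exact ⟨⟨⟨m, rfl⟩, hn0⟩, by omega, by nlinarith⟩
    · exact ⟨⟨⟨l, by ring⟩, hn0⟩, by omega, by nlinarith⟩
    · exact ⟨⟨hd, hn0⟩, by omega, by nlinarith⟩

theorem stmt16 (q : ℕ) (F : Type) [Field F] [Fintype F] (hq : Fintype.card F = q)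
    (p : ℕ) (hp : ringChar F = p) (n : ℕ) (hn : 4 ≤ n) (hcomp : ¬ n.Prime)
    (hpn : ¬ p ∣ n) :
    |(Set.ncard (Duniv F n) : ℝ) - alphaN q n| ≤
      alphaN q n * (q : ℝ) ^ (-(n : ℝ) / (3 * (n.minFac : ℝ) ^ 2)) := by
  classical
  have hcast : ∀ k : ℕ, k ∣ n → (k : F) ≠ 0 := by
    intro k hk h0
    apply hpn
    rw [← hp]
    exact (ringChar.dvd h0).trans hk
  have hq1 : 2 ≤ q := by
    rw [← hq]; exact Fintype.one_lt_card
  have hqR : (2 : ℝ) ≤ q := by exact_mod_cast hq1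
  have hn1 : n ≠ 1 := by omega
  have hprime := Nat.minFac_prime hn1
  obtain ⟨m, hm⟩ := Nat.minFac_dvd n
  obtain ⟨l, hl⟩ : ∃ l, l = n.minFac := ⟨_, rfl⟩
  rw [← hl] at hprime hm
  have hl2 := hprime.two_le
  have hm2 : 2 ≤ m := by
    by_contra h
    have : m = 0 ∨ m = 1 := by omega
    rcases this with rfl | rfl
    · omega
    · rw [mul_one] at hm
      exact hcomp (hm ▸ hprime)
  have hlm : l ≤ m := by
    rw [hl]
    exact Nat.minFac_le_of_dvd hm2 ⟨l, by rw [hm]; ring⟩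
  have hdiv : n / l = m := by rw [hm, Nat.mul_div_cancel_left _ (by omega)]
  have hdivm : n / m = l := by rw [hm, Nat.mul_div_cancel _ (by omega)]
  have hpos : (0 : ℝ) < (q : ℝ) ^ (-(n : ℝ) / (3 * (n.minFac : ℝ) ^ 2)) :=
    Real.rpow_pos_of_pos (by linarith) _
  have hU := duniv_eq (F := F) n (by omega)
  rcases Nat.eq_or_lt_of_le hlm with heq | hlt
  · subst heq
    have hsq : n = n.minFac ^ 2 := by rw [← hl, hm]; ring
    have hfil : n.divisors.filter (fun e => 1 < e ∧ e < n) = {l} := by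
      rw [hm, ← sq, Nat.divisors_prime_pow hprime]
      ext e
      simp only [Finset.mem_filter, Finset.mem_map, Finset.mem_range, Finset.mem_singleton,
        Function.Embedding.coeFn_mk]
      constructor
      · rintro ⟨⟨a, ha, rfl⟩, h1, h2⟩
        have : a = 0 ∨ a = 1 ∨ a = 2 := by omega
        rcases this with rfl | rfl | rfl
        · simp at h1
        · simp
        · simp at h2
      · rintro rfl
        exact ⟨⟨1, by omega, by simp⟩, by omega, by nlinarith⟩
    have hcard : (Duniv F n).ncard = q ^ (2 * l - 2) := by
      rw [hU, hfil]
      simp only [Finset.mem_singleton, Set.iUnion_iUnion_eq_left]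
      rw [hdiv, dset_ncard l l hl2 (by omega) (hcast l ⟨l, hm⟩), hq]
      congr 1
      omega
    have hα : alphaN q n = (q : ℝ) ^ (2 * l - 2) := by
      rw [alphaN, if_pos hsq, hl]
    rw [hcard, hα]
    push_cast
    rw [sub_self, abs_zero]
    exact (mul_pos (by positivity) hpos).le
  · have hsq : ¬ n = n.minFac ^ 2 := by
      rw [← hl, hm, sq]
      intro h
      have := Nat.eq_of_mul_eq_mul_left (by omega) h
      omega
    have hα : alphaN q n = 2 * (q : ℝ) ^ (l + m - 2) := by
      rw [alphaN, if_neg hsq, ← hl, hdiv]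
    have hexp : -(n : ℝ) / (3 * (n.minFac : ℝ) ^ 2) = -((m : ℝ) / (3 * l)) := by
      have : (l : ℝ) ≠ 0 := by norm_cast; omega
      rw [← hl, hm]
      push_cast
      field_simp
    rw [hexp, hα]
    have hmin : (l * m).minFac = l := by rw [← hm, ← hl]
    have hunion : Duniv F n = (DSet F l m ∪ DSet F m l) ∪
        ⋃ e ∈ midDiv l m, DSet F e (l * m / e) := by
      rw [hU, hm, divs_split l m hl2 hlt hmin, ← hm, Finset.set_biUnion_insert,
        Finset.set_biUnion_insert, hdiv, hdivm, Set.union_assoc]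
    have fin1 := dset_finite (F := F) l m (by omega) (by omega)
    have fin2 := dset_finite (F := F) m l (by omega) (by omega)
    have c1 := dset_ncard (F := F) l m hl2 (by omega) (hcast l ⟨m, hm⟩)
    have c2 := dset_ncard (F := F) m l (by omega) (by omega) (hcast m ⟨l, by rw [hm]; ring⟩)
    have c3 := inter_ncard (F := F) l m hl2 (by omega) (hcast l ⟨m, hm⟩)
    have c4 := Set.ncard_union_add_ncard_inter (DSet F l m) (DSet F m l) fin1 fin2
    rw [add_comm m l] at c2
    rw [hq] at c1 c2 c3
    have hposmid : ∀ e ∈ midDiv l m, 1 ≤ e ∧ 1 ≤ l * m / e := by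
      intro e he
      have hs := (mid_mem_symm l m e hl2 (by omega) he).1
      simp only [midDiv, Finset.mem_filter] at he hs
      omega
    have finmid : (⋃ e ∈ midDiv l m, DSet F e (l * m / e)).Finite :=
      Set.Finite.biUnion (Finset.finite_toSet _)
        (fun e he => dset_finite e _ (hposmid e he).1 (hposmid e he).2)
    have c5 : (⋃ e ∈ midDiv l m, DSet F e (l * m / e)).ncard ≤
        ∑ e ∈ midDiv l m, q ^ (e + l * m / e - 2) := by
      refine (Finset.set_ncard_biUnion_le _ _).trans (Finset.sum_le_sum fun e he => ?_)
      have := dset_ncard_le (F := F) e (l * m / e) (hposmid e he).1 (hposmid e he).2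
      rwa [hq] at this
    have c6 : (Duniv F n).ncard ≤ (DSet F l m ∪ DSet F m l).ncard +
        (⋃ e ∈ midDiv l m, DSet F e (l * m / e)).ncard := by
      rw [hunion]; exact Set.ncard_union_le _ _
    have c7 : (DSet F l m ∪ DSet F m l).ncard ≤ (Duniv F n).ncard := by
      rw [hunion]
      exact Set.ncard_le_ncard Set.subset_union_left ((fin1.union fin2).union finmid)
    have n1 := num_inter q (by linarith) l m hl2 hlt
    have n2 : ∑ e ∈ midDiv l m, (q : ℝ) ^ (e + l * m / e - 2) ≤
        2 * (q : ℝ) ^ (l + m - 2) * (q : ℝ) ^ (-((m : ℝ) / (3 * l))) := by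
      rcases Nat.lt_or_ge 2 l with h3 | h3
      · refine num_mid_odd q hqR l m h3 hlt ?_ hmin
        rw [← Nat.not_even_iff_odd, even_iff_two_dvd]
        intro h
        have := Nat.minFac_le_of_dvd (le_refl 2) h
        omega
      · obtain rfl : l = 2 := by omega
        refine num_mid_two q ?_ m hlt
        have : q ≠ 2 := by
          intro h2
          apply hcast 2 ⟨m, hm⟩
          have := FiniteField.cast_card_eq_zero F
          rwa [hq, h2] at this
        exact_mod_cast (by omega : 3 ≤ q)
    have d3 : ((DSet F l m ∩ DSet F m l).ncard : ℝ) ≤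
        (q : ℝ) ^ ((l - 1) + m / l + (l - 2)) := by exact_mod_cast c3
    have d4 : ((DSet F l m ∪ DSet F m l).ncard : ℝ) + (DSet F l m ∩ DSet F m l).ncard
        = 2 * (q : ℝ) ^ (l + m - 2) := by
      rw [c1, c2] at c4
      have : ((DSet F l m ∪ DSet F m l).ncard : ℝ) + (DSet F l m ∩ DSet F m l).ncard
        = (q : ℝ) ^ (l + m - 2) + (q : ℝ) ^ (l + m - 2) := by exact_mod_cast c4
      rw [this]; ring
    have d5 : ((⋃ e ∈ midDiv l m, DSet F e (l * m / e)).ncard : ℝ) ≤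
        ∑ e ∈ midDiv l m, (q : ℝ) ^ (e + l * m / e - 2) := by exact_mod_cast c5
    have d6 : ((Duniv F n).ncard : ℝ) ≤ (DSet F l m ∪ DSet F m l).ncard +
        (⋃ e ∈ midDiv l m, DSet F e (l * m / e)).ncard := by exact_mod_cast c6
    have d7 : ((DSet F l m ∪ DSet F m l).ncard : ℝ) ≤ (Duniv F n).ncard := by exact_mod_cast c7
    have d8 : (0 : ℝ) ≤ (DSet F l m ∩ DSet F m l).ncard := Nat.cast_nonneg _
    have d9 : 0 ≤ (q : ℝ) ^ (l + m - 2) * (q : ℝ) ^ (-((m : ℝ) / (3 * l))) := by positivity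
    rw [abs_le]
    constructor <;> linarith
end
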